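/- arXiv:2405.19999 — 2 statements merged into one kernel-verified Lean document; each statement's English description precedes it below -/
import Mathlib

section
/- Among all trees T on n vertices with diameter greater than 3, the spectral radius of the complement satisfies λ_1(A(P_n^c)) ≤ λ_1(A(T^c)) ≤ λ_1(A(T(n−3,1)^c)), with equality on the left iff T ≅ P_n and on the right iff T ≅ T(n−3,1). -/
open Matrix SimpleGraph
open scoped Classical

/-- `T(n-3,1)`: the tree obtained from a path on 3 vertices `0-1-2` by attaching
`n - 3` pendant vertices to the endpoint `2`. -/
def broom (n : ℕ) : SimpleGraph (Fin n) :=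
  SimpleGraph.fromRel (fun i j =>
    ((i : ℕ) = 0 ∧ (j : ℕ) = 1) ∨ ((i : ℕ) = 2 ∧ (j : ℕ) ≠ 2 ∧ (j : ℕ) ≠ 0))


lemma top_psd {n : ℕ} (M : Matrix (Fin n) (Fin n) ℝ) (hM : M.IsHermitian) (lam : ℝ)
    (h : IsGreatest (spectrum ℝ M) lam) :
    (algebraMap ℝ (Matrix (Fin n) (Fin n) ℝ) lam - M).PosSemidef := by
  have hH : (algebraMap ℝ (Matrix (Fin n) (Fin n) ℝ) lam - M).IsHermitian := by
    refine IsHermitian.sub ?_ hM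
    rw [Matrix.algebraMap_eq_diagonal]
    exact Matrix.isHermitian_diagonal _
  rw [hH.posSemidef_iff_eigenvalues_nonneg]
  intro i
  have := hH.eigenvalues_mem_spectrum_real i
  rw [← spectrum.singleton_sub_eq] at this
  obtain ⟨a, ha, b, hb, hab⟩ := this
  have h1 := h.2 hb
  simp only [Set.mem_singleton_iff] at ha
  simp only [Pi.zero_apply]
  linarith

/-- Row action of the adjacency matrix. -/
noncomputable def act {n : ℕ} (G : SimpleGraph (Fin n)) (x : Fin n → ℝ) (v : Fin n) : ℝ :=
  ∑ u, if G.Adj v u then x u else 0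

lemma compl_row {n : ℕ} (G : SimpleGraph (Fin n)) [DecidableRel Gᶜ.Adj] (x : Fin n → ℝ)
    (v : Fin n) : ((Gᶜ.adjMatrix ℝ) *ᵥ x) v = ∑ u, x u - x v - act G x v := by
  have h2 : x v = ∑ u, if u = v then x u else 0 := by simp
  unfold act
  conv_rhs => rw [h2]
  rw [← Finset.sum_sub_distrib, ← Finset.sum_sub_distrib]
  unfold Matrix.mulVec dotProduct
  refine Finset.sum_congr rfl fun u _ => ?_
  simp only [SimpleGraph.adjMatrix_apply, SimpleGraph.compl_adj]
  by_cases huv : u = v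
  · subst huv; simp
  · have : v ≠ u := fun h => huv h.symm
    by_cases ha : G.Adj v u <;> simp [huv, this, ha]

lemma herm_compl {n : ℕ} (G : SimpleGraph (Fin n)) [DecidableRel G.Adj] :
    (G.adjMatrix ℝ).IsHermitian := by
  unfold Matrix.IsHermitian
  rw [Matrix.conjTranspose_eq_transpose_of_trivial]
  exact SimpleGraph.isSymm_adjMatrix _

lemma form_eq {n : ℕ} (G : SimpleGraph (Fin n)) [DecidableRel Gᶜ.Adj] (lam : ℝ) (x : Fin n → ℝ) :
    star x ⬝ᵥ ((algebraMap ℝ (Matrix (Fin n) (Fin n) ℝ) lam - Gᶜ.adjMatrix ℝ) *ᵥ x)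
     = (lam + 1) * ∑ v, x v ^ 2 + ∑ v, x v * act G x v - (∑ v, x v) ^ 2 := by
  have : ∀ v, ((algebraMap ℝ (Matrix (Fin n) (Fin n) ℝ) lam - Gᶜ.adjMatrix ℝ) *ᵥ x) v
     = (lam + 1) * x v + act G x v - ∑ u, x u := by
    intro v
    rw [Matrix.sub_mulVec, Pi.sub_apply, compl_row, Algebra.algebraMap_eq_smul_one,
      Matrix.smul_mulVec, Matrix.one_mulVec]
    simp only [Pi.smul_apply, smul_eq_mul]
    ring
  unfold dotProduct
  simp only [this, star_trivial]
  rw [sq (∑ v, x v), Finset.sum_mul, Finset.mul_sum, ← Finset.sum_add_distrib,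
    ← Finset.sum_sub_distrib]
  refine Finset.sum_congr rfl fun u _ => ?_
  ring

lemma rayleigh {n : ℕ} (G : SimpleGraph (Fin n)) [DecidableRel Gᶜ.Adj] (lam : ℝ)
    (h : IsGreatest (spectrum ℝ (Gᶜ.adjMatrix ℝ)) lam) (x : Fin n → ℝ) :
    (∑ v, x v) ^ 2 ≤ (lam + 1) * ∑ v, x v ^ 2 + ∑ v, x v * act G x v := by
  have := (top_psd _ (herm_compl _) lam h).dotProduct_mulVec_nonneg x
  rw [form_eq] at this
  linarith

lemma rayleigh_eq {n : ℕ} (G : SimpleGraph (Fin n)) [DecidableRel Gᶜ.Adj] (lam : ℝ)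
    (h : IsGreatest (spectrum ℝ (Gᶜ.adjMatrix ℝ)) lam) (x : Fin n → ℝ)
    (hx : (lam + 1) * ∑ v, x v ^ 2 + ∑ v, x v * act G x v ≤ (∑ v, x v) ^ 2) (v : Fin n) :
    (lam + 1) * x v + act G x v = ∑ u, x u := by
  have hp := top_psd _ (herm_compl _) lam h
  have h0 := form_eq G lam x
  have h1 := rayleigh G lam h x
  have h2 := (hp.dotProduct_mulVec_zero_iff x).1 (by rw [h0]; linarith)
  have h3 := congrFun h2 v
  rw [Matrix.sub_mulVec, Pi.sub_apply, compl_row, Algebra.algebraMap_eq_smul_one,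
      Matrix.smul_mulVec, Matrix.one_mulVec] at h3
  simp only [Pi.smul_apply, smul_eq_mul, Pi.zero_apply] at h3
  linarith

lemma perron {n : ℕ} (G : SimpleGraph (Fin n)) [DecidableRel Gᶜ.Adj] (lam : ℝ)
    (h : IsGreatest (spectrum ℝ (Gᶜ.adjMatrix ℝ)) lam) :
    ∃ x : Fin n → ℝ, (∀ v, 0 ≤ x v) ∧ (∃ v, 0 < x v) ∧
      ∀ v, (lam + 1) * x v + act G x v = ∑ u, x u := by
  have h1 := h.1
  rw [← Matrix.spectrum_toLin', ← Module.End.hasEigenvalue_iff_mem_spectrum] at h1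
  obtain ⟨x, hx⟩ := h1.exists_hasEigenvector
  have hx0 : x ≠ 0 := hx.2
  have hxe : (Gᶜ.adjMatrix ℝ) *ᵥ x = lam • x := by
    have := hx.apply_eq_smul
    rwa [Matrix.toLin'_apply] at this
  obtain ⟨w, hw⟩ := Function.ne_iff.1 hx0
  refine ⟨fun v => |x v|, fun v => abs_nonneg _, ⟨w, abs_pos.2 hw⟩, ?_⟩
  apply rayleigh_eq G lam h
  -- lower bound for the quadratic form of the complement
  have key : ∀ y : Fin n → ℝ, ∑ v, y v * ((Gᶜ.adjMatrix ℝ) *ᵥ y) v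
      = (∑ v, y v) ^ 2 - ∑ v, y v ^ 2 - ∑ v, y v * act G y v := by
    intro y
    rw [sq (∑ v, y v), Finset.sum_mul, ← Finset.sum_sub_distrib, ← Finset.sum_sub_distrib]
    refine Finset.sum_congr rfl fun u _ => ?_
    rw [compl_row]; ring
  have e1 : ∑ v, x v * ((Gᶜ.adjMatrix ℝ) *ᵥ x) v = lam * ∑ v, |x v| ^ 2 := by
    rw [hxe, Finset.mul_sum]
    refine Finset.sum_congr rfl fun u _ => ?_
    simp only [Pi.smul_apply, smul_eq_mul, sq_abs]; ring
  have e2 : ∑ v, x v * ((Gᶜ.adjMatrix ℝ) *ᵥ x) v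
      ≤ ∑ v, |x v| * ((Gᶜ.adjMatrix ℝ) *ᵥ (fun v => |x v|)) v := by
    refine Finset.sum_le_sum fun u _ => ?_
    unfold Matrix.mulVec dotProduct
    rw [Finset.mul_sum, Finset.mul_sum]
    refine Finset.sum_le_sum fun t _ => ?_
    simp only [SimpleGraph.adjMatrix_apply]
    split_ifs
    · rw [one_mul, one_mul, ← abs_mul]; exact le_abs_self _
    · simp
  have e3 := key (fun v => |x v|)
  linarith

lemma iso_top {n : ℕ} (G H : SimpleGraph (Fin n)) [DecidableRel Gᶜ.Adj] [DecidableRel Hᶜ.Adj]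
    (lam mu : ℝ) (hG : IsGreatest (spectrum ℝ (Gᶜ.adjMatrix ℝ)) lam)
    (hH : IsGreatest (spectrum ℝ (Hᶜ.adjMatrix ℝ)) mu) (e : G ≃g H) : lam ≤ mu := by
  obtain ⟨x, h0, ⟨w, hw⟩, hx⟩ := perron G lam hG
  have hr := rayleigh H mu hH (fun v => x (e.symm v))
  have s1 : ∑ v, x (e.symm v) = ∑ v, x v := Equiv.sum_comp e.symm.toEquiv x
  have s2 : ∑ v, x (e.symm v) ^ 2 = ∑ v, x v ^ 2 :=
    Equiv.sum_comp e.symm.toEquiv (fun v => x v ^ 2)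
  have ha : ∀ v, act H (fun v => x (e.symm v)) v = act G x (e.symm v) := by
    intro v
    unfold act
    rw [← Equiv.sum_comp e.symm.toEquiv (fun u => if G.Adj (e.symm v) u then x u else 0)]
    refine Finset.sum_congr rfl fun u _ => ?_
    have : G.Adj (e.symm v) (e.symm u) ↔ H.Adj v u := e.symm.map_adj_iff
    simp only [RelIso.coe_fn_toEquiv, this]
  have s3 : ∑ v, x (e.symm v) * act H (fun v => x (e.symm v)) v = ∑ v, x v * act G x v := by
    simp only [ha]
    exact Equiv.sum_comp e.symm.toEquiv (fun v => x v * act G x v)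
  rw [s1, s2, s3] at hr
  have s4 : (lam + 1) * ∑ v, x v ^ 2 + ∑ v, x v * act G x v = (∑ v, x v) ^ 2 := by
    rw [sq (∑ v, x v), Finset.sum_mul, Finset.mul_sum, ← Finset.sum_add_distrib]
    refine Finset.sum_congr rfl fun u _ => ?_
    rw [← hx u]; ring
  have s5 : 0 < ∑ v, x v ^ 2 :=
    Finset.sum_pos' (fun v _ => sq_nonneg _) ⟨w, Finset.mem_univ _, by positivity⟩
  nlinarith

lemma exists_par {n : ℕ} (T : SimpleGraph (Fin n)) (hc : T.Connected) (c v : Fin n) (h : v ≠ c) :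
    ∃ p, T.Adj v p ∧ T.dist c v = T.dist c p + 1 := by
  obtain ⟨p, hp⟩ := hc.exists_walk_length_eq_dist v c
  cases p with
  | nil => exact absurd rfl h
  | cons hadj q =>
    rename_i w
    refine ⟨w, hadj, ?_⟩
    rw [SimpleGraph.Walk.length_cons] at hp
    have h1 := SimpleGraph.dist_le q
    have h2 := hc.dist_triangle (u := c) (v := w) (w := v)
    have h3 := SimpleGraph.dist_eq_one_iff_adj.2 hadj
    rw [SimpleGraph.dist_comm (u := c) (v := v)] at *
    rw [SimpleGraph.dist_comm (u := c) (v := w)] at *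
    rw [SimpleGraph.dist_comm (u := w) (v := v)] at *
    omega

lemma exists_perm3 {n : ℕ} (i j k a b c : Fin n) (hij : i ≠ j) (hik : i ≠ k) (hjk : j ≠ k)
    (hab : a ≠ b) (hac : a ≠ c) (hbc : b ≠ c) :
    ∃ σ : Equiv.Perm (Fin n), σ i = a ∧ σ j = b ∧ σ k = c := by
  let s1 : Equiv.Perm (Fin n) := Equiv.swap i a
  have h1 : s1 i = a := Equiv.swap_apply_left _ _
  let s2 : Equiv.Perm (Fin n) := (Equiv.swap j (s1.symm b)).trans s1
  have h2j : s2 j = b := by simp [s2]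
  have hb' : i ≠ s1.symm b := by
    intro h; apply hab; rw [← h1, h]; simp
  have h2i : s2 i = a := by
    simp only [s2, Equiv.trans_apply, Equiv.swap_apply_of_ne_of_ne hij hb', h1]
  let s3 : Equiv.Perm (Fin n) := (Equiv.swap k (s2.symm c)).trans s2
  have hci : i ≠ s2.symm c := by
    intro h; apply hac; rw [← h2i, h]; simp
  have hcj : j ≠ s2.symm c := by
    intro h; apply hbc; rw [← h2j, h]; simp
  refine ⟨s3, ?_, ?_, ?_⟩
  · simp only [s3, Equiv.trans_apply, Equiv.swap_apply_of_ne_of_ne hik hci, h2i]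
  · simp only [s3, Equiv.trans_apply, Equiv.swap_apply_of_ne_of_ne hjk hcj, h2j]
  · simp [s3]

lemma act_broom {n : ℕ} (w : Fin n → ℝ) (z o t : Fin n) (hz : (z : ℕ) = 0) (ho : (o : ℕ) = 1)
    (ht : (t : ℕ) = 2) (i : Fin n) :
    act (broom n) w i = (if i = z then w o else 0) + (if i = o then w z else 0)
      + (if i = t then (∑ u, w u) - w t - w z else 0)
      + (1 - (if i = t then 1 else 0) - (if i = z then 1 else 0)) * w t := by
  have key : ∀ j, (if (broom n).Adj i j then w j else 0)
      = (if i = z then 1 else 0) * (if j = o then w j else 0)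
      + (if i = o then 1 else 0) * (if j = z then w j else 0)
      + (if i = t then 1 else 0) *
          (w j - (if j = t then w j else 0) - (if j = z then w j else 0))
      + (1 - (if i = t then 1 else 0) - (if i = z then 1 else 0)) *
          (if j = t then w j else 0) := by
    intro j
    have : (broom n).Adj i j ↔ (i = z ∧ j = o) ∨ (i = o ∧ j = z) ∨ (i = t ∧ j ≠ t ∧ j ≠ z) ∨
        (j = t ∧ i ≠ t ∧ i ≠ z) := by
      unfold broom
      rw [SimpleGraph.fromRel_adj]
      simp only [ne_eq, Fin.ext_iff, hz, ho, ht]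
      omega
    have hzo : z ≠ o := by intro h; rw [h] at hz; omega
    have hzt : z ≠ t := by intro h; rw [h] at hz; omega
    have hot : o ≠ t := by intro h; rw [h] at ho; omega
    simp only [this]
    by_cases h1 : i = z
    · subst h1
      by_cases h2 : j = o
      · subst h2; simp [hzo, hzt, hzo.symm]
      · by_cases h3 : j = t
        · subst h3; simp [hzo, hzt, hot.symm]
        · simp [hzo, hzt, h2, h3]
    · by_cases h4 : i = t
      · subst h4
        by_cases h3 : j = i
        · subst h3; simp [hzt.symm, hot.symm]
        · by_cases h5 : j = z
          · subst h5; simp [hzt, hzo, hzt.symm, hot.symm]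
          · simp [h1, h3, h5]
      · by_cases h3 : j = t
        · subst h3; simp [h1, h4, hzt.symm]
        · by_cases h5 : j = z
          · subst h5; simp [h1, h4, hzt]
          · simp [h1, h4, h3, h5]
  unfold act
  simp only [key]
  rw [Finset.sum_add_distrib, Finset.sum_add_distrib, Finset.sum_add_distrib,
    ← Finset.mul_sum, ← Finset.mul_sum, ← Finset.mul_sum, ← Finset.mul_sum,
    Finset.sum_sub_distrib, Finset.sum_sub_distrib]
  simp

lemma form_broom {n : ℕ} (w : Fin n → ℝ) (z o t : Fin n) (hz : (z : ℕ) = 0) (ho : (o : ℕ) = 1)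
    (ht : (t : ℕ) = 2) :
    ∑ i, w i * act (broom n) w i = 2 * (w z * w o + w t * ((∑ u, w u) - w t - w z)) := by
  have : ∀ i, w i * act (broom n) w i = (if i = z then w i * w o else 0)
      + (if i = o then w i * w z else 0)
      + (if i = t then w i * ((∑ u, w u) - w t - w z) else 0)
      + (w i * w t - (if i = t then w i * w t else 0) - (if i = z then w i * w t else 0)) := by
    intro i
    rw [act_broom w z o t hz ho ht]
    split_ifs <;> ring
  simp only [this]
  rw [Finset.sum_add_distrib, Finset.sum_add_distrib, Finset.sum_add_distrib,
    Finset.sum_sub_distrib, Finset.sum_sub_distrib, ← Finset.sum_mul]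
  simp
  ring

lemma broom_lt {n : ℕ} (T : SimpleGraph (Fin n)) [DecidableRel Tᶜ.Adj] [DecidableRel (broom n)ᶜ.Adj]
    (hc : T.Connected) (hd : ∃ u v : Fin n, 3 < T.dist u v) (lamT lamB : ℝ)
    (hlamT : IsGreatest (spectrum ℝ (Tᶜ.adjMatrix ℝ)) lamT)
    (hlamB : IsGreatest (spectrum ℝ ((broom n)ᶜ.adjMatrix ℝ)) lamB) : lamT < lamB := by
  obtain ⟨x, hx0, ⟨w0, hw0⟩, hx⟩ := perron T lamT hlamT
  obtain ⟨p, q, hpq⟩ := hd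
  -- positivity
  have hclose : ∀ z, x z = 0 → ∀ w, 0 < x w → T.Adj z w := by
    intro z hz w hw
    by_contra hn
    have h1 := hx z
    rw [hz] at h1
    unfold act at h1
    have : ∑ u, (if T.Adj z u then x u else 0) < ∑ u, x u := by
      refine Finset.sum_lt_sum (fun u _ => ?_) ⟨w, Finset.mem_univ _, ?_⟩
      · split_ifs
        · exact le_rfl
        · exact hx0 u
      · rw [if_neg hn]; exact hw
    linarith
  have hpos : ∀ v, 0 < x v := by
    by_contra hcon
    push Not at hcon
    obtain ⟨z, hz⟩ := hcon
    have hz : x z = 0 := le_antisymm hz (hx0 z)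
    have hone : ∀ u v, T.Adj u v → T.dist u v = 1 := fun u v h =>
      SimpleGraph.dist_eq_one_iff_adj.2 h
    rcases (hx0 p).eq_or_lt with h1 | h1 <;> rcases (hx0 q).eq_or_lt with h2 | h2
    · have a1 := hone _ _ (hclose p h1.symm w0 hw0)
      have a2 := hone _ _ (hclose q h2.symm w0 hw0).symm
      have := hc.dist_triangle (u := p) (v := w0) (w := q)
      omega
    · have a1 := hone _ _ (hclose p h1.symm q h2)
      omega
    · have a1 := hone _ _ (hclose q h2.symm p h1).symm
      omega
    · have a1 := hone _ _ (hclose z hz p h1).symm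
      have a2 := hone _ _ (hclose z hz q h2)
      have := hc.dist_triangle (u := p) (v := z) (w := q)
      omega
  have : Nonempty (Fin n) := ⟨p⟩
  obtain ⟨c, hcmin⟩ := Finite.exists_min x
  have hpar : ∀ v, ∃ r, v ≠ c → T.Adj v r ∧ T.dist c v = T.dist c r + 1 := by
    intro v
    by_cases h : v = c
    · exact ⟨c, fun h' => absurd h h'⟩
    · obtain ⟨r, hr⟩ := exists_par T hc c v h
      exact ⟨r, fun _ => hr⟩
  choose par hpar using hpar
  have ha : ∃ a, 2 ≤ T.dist c a := by
    by_contra hcon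
    push Not at hcon
    have h1 := hcon p
    have h2 := hcon q
    have := hc.dist_triangle (u := p) (v := c) (w := q)
    rw [SimpleGraph.dist_comm (u := p) (v := c)] at this
    omega
  obtain ⟨a, ha⟩ := ha
  have hac : a ≠ c := by rintro rfl; simp at ha
  obtain ⟨b, hb⟩ : ∃ b, b = par a := ⟨_, rfl⟩
  have hab := hpar a hac
  rw [← hb] at hab
  have hbc : b ≠ c := by
    intro h
    have := hab.2
    rw [h, SimpleGraph.dist_self] at this
    omega
  have hne : a ≠ b := hab.1.ne
  -- lower bound for the form of `T`
  have hF : ∑ u, x u * act T x u ≥ 2 * ∑ u, (if u = c then 0 else x u * x (par u)) := by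
    have hs1 : ∑ u, (if u = c then 0 else x u * x (par u))
        = ∑ u, ∑ v, (if u ≠ c ∧ v = par u then x u * x v else 0) := by
      refine Finset.sum_congr rfl fun u _ => ?_
      by_cases h : u = c <;> simp [h]
    have hs2 : ∑ u, (if u = c then 0 else x u * x (par u))
        = ∑ u, ∑ v, (if v ≠ c ∧ u = par v then x u * x v else 0) := by
      rw [hs1, Finset.sum_comm]
      refine Finset.sum_congr rfl fun u _ => Finset.sum_congr rfl fun v _ => ?_
      split_ifs
      · ring
      · rfl
    rw [two_mul]
    nth_rw 1 [hs1]
    rw [hs2, ← Finset.sum_add_distrib]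
    refine Finset.sum_le_sum fun u _ => ?_
    rw [← Finset.sum_add_distrib]
    unfold act
    rw [Finset.mul_sum]
    refine Finset.sum_le_sum fun v _ => ?_
    have huv := mul_nonneg (hx0 u) (hx0 v)
    by_cases h1 : u ≠ c ∧ v = par u
    · have hp1 := hpar u h1.1
      rw [← h1.2] at hp1
      have h2 : ¬ (v ≠ c ∧ u = par v) := by
        intro h2
        have hp2 := hpar v h2.1
        rw [← h2.2] at hp2
        omega
      rw [if_pos h1, if_neg h2, if_pos hp1.1]
      simp
    · rw [if_neg h1]
      by_cases h2 : v ≠ c ∧ u = par v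
      · have hp2 := hpar v h2.1
        rw [← h2.2] at hp2
        rw [if_pos h2, if_pos hp2.1.symm]
        simp
      · rw [if_neg h2]
        split_ifs <;> simp [huv]
  have hG : ∑ u, (if u = c then 0 else x u * x (par u))
      ≥ x a * x b + x c * ((∑ u, x u) - x c - x a) := by
    have : x a * x b + x c * ((∑ u, x u) - x c - x a)
      = ∑ u, ((if u = a then x u * x b else 0) + (x c * x u - (if u = c then x c * x u else 0)
         - (if u = a then x c * x u else 0))) := by
      rw [Finset.sum_add_distrib, Finset.sum_sub_distrib, Finset.sum_sub_distrib, ← Finset.mul_sum]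
      simp
      ring
    rw [this]
    refine Finset.sum_le_sum fun u _ => ?_
    by_cases h1 : u = c
    · subst h1
      simp [hac.symm]
    · by_cases h2 : u = a
      · subst h2
        simp [h1, hb]
      · simp only [h1, h2, if_false]
        have := mul_le_mul_of_nonneg_left (hcmin (par u)) (hx0 u)
        linarith
  -- transport to the broom
  have hn : 2 < n := by
    have := Finset.card_le_univ ({a, b, c} : Finset (Fin n))
    rw [Finset.card_eq_three.2 ⟨a, b, c, hne, hac, hbc, rfl⟩, Fintype.card_fin] at this
    omega
  obtain ⟨σ, hσ0, hσ1, hσ2⟩ := exists_perm3 (⟨0, by omega⟩ : Fin n) ⟨1, by omega⟩ ⟨2, hn⟩ a b c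
    (by simp) (by simp) (by simp) hne hac hbc
  have f1 := form_broom (fun i => x (σ i)) ⟨0, by omega⟩ ⟨1, by omega⟩ ⟨2, hn⟩ rfl rfl rfl
  have s1 : ∑ v, x (σ v) = ∑ v, x v := Equiv.sum_comp σ x
  have s2 : ∑ v, x (σ v) ^ 2 = ∑ v, x v ^ 2 := Equiv.sum_comp σ (fun v => x v ^ 2)
  have s4 : (lamT + 1) * ∑ v, x v ^ 2 + ∑ v, x v * act T x v = (∑ v, x v) ^ 2 := by
    rw [sq (∑ v, x v), Finset.sum_mul, Finset.mul_sum, ← Finset.sum_add_distrib]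
    refine Finset.sum_congr rfl fun u _ => ?_
    rw [← hx u]; ring
  have s5 : 0 < ∑ v, x v ^ 2 :=
    Finset.sum_pos' (fun v _ => sq_nonneg _) ⟨w0, Finset.mem_univ _, by positivity⟩
  have hr := rayleigh (broom n) lamB hlamB (fun i => x (σ i))
  have f2 := act_broom (fun i => x (σ i)) ⟨0, by omega⟩ ⟨1, by omega⟩ ⟨2, hn⟩ rfl rfl rfl ⟨2, hn⟩
  simp only [hσ0, hσ1, hσ2, s1] at f1
  simp only [hσ0, hσ1, hσ2, s1] at f2
  by_contra hle
  push Not at hle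
  have hle2 := mul_le_mul_of_nonneg_right hle s5.le
  have he := rayleigh_eq (broom n) lamB hlamB (fun i => x (σ i))
    (by simp only [s1, s2]; linarith) ⟨2, hn⟩
  simp only [s1, s2] at hr
  have hlam : lamT = lamB := by
    apply le_antisymm _ hle
    by_contra hlt
    push Not at hlt
    have := mul_lt_mul_of_pos_right hlt s5
    linarith
  rw [f2] at he
  simp only [hσ2, s1] at he
  simp at he
  have hxc := hx c
  have hsum : act T x c = (∑ u, x u) - x c - x a := by
    rw [hlam] at hxc; linarith
  have hall : ∀ u, u ≠ c → u ≠ a → T.Adj c u := by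
    intro v hvc hva
    by_contra hn
    have e1 : (∑ u, x u) - x c - x a
        = ∑ u, (x u - (if u = c then x u else 0) - (if u = a then x u else 0)) := by
      rw [Finset.sum_sub_distrib, Finset.sum_sub_distrib]; simp
    rw [e1] at hsum
    unfold act at hsum
    have : ∑ u, (if T.Adj c u then x u else 0)
        < ∑ u, (x u - (if u = c then x u else 0) - (if u = a then x u else 0)) := by
      refine Finset.sum_lt_sum (fun u _ => ?_) ⟨v, Finset.mem_univ _, ?_⟩
      · by_cases h1 : u = c
        · subst h1; simp [hac.symm]
        · by_cases h2 : u = a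
          · subst h2
            have : ¬ T.Adj c u := by
              intro h
              have := SimpleGraph.dist_eq_one_iff_adj.2 h
              omega
            simp [h1, this]
          · simp only [h1, h2, if_false, sub_zero]
            split_ifs
            · exact le_rfl
            · exact hx0 u
      · simp [hn, hvc, hva, hpos v]
    linarith
  have hd1 : ∀ u, u ≠ a → T.dist c u ≤ 1 := by
    intro u hu
    by_cases h : u = c
    · subst h; simp
    · exact (SimpleGraph.dist_eq_one_iff_adj.2 (hall u h hu)).le
  have hd2 : T.dist c a ≤ 2 := by
    have := hd1 b hne.symm
    omega
  have htri := hc.dist_triangle (u := p) (v := c) (w := q)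
  rw [SimpleGraph.dist_comm (u := p) (v := c)] at htri
  by_cases hp : p = a
  · by_cases hq : q = a
    · rw [hp, hq] at hpq; simp at hpq
    · have := hd1 q hq
      rw [hp] at htri hpq
      omega
  · have := hd1 p hp
    by_cases hq : q = a
    · rw [hq] at htri hpq; omega
    · have := hd1 q hq
      omega

lemma sum_act {n : ℕ} (G : SimpleGraph (Fin n)) (f : Fin n → ℝ) :
    ∑ v, act G f v = ∑ u, f u * act G (fun _ => 1) u := by
  unfold act
  rw [Finset.sum_comm]
  refine Finset.sum_congr rfl fun u _ => ?_
  rw [Finset.mul_sum]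
  refine Finset.sum_congr rfl fun v _ => ?_
  simp [SimpleGraph.adj_comm]

lemma act_one {n : ℕ} (G : SimpleGraph (Fin n)) (v : Fin n) :
    act G (fun _ => 1) v = (G.degree v : ℝ) := by
  unfold act
  rw [Finset.sum_boole, ← SimpleGraph.card_neighborFinset_eq_degree]
  congr 2
  ext u
  simp

lemma act_path {n : ℕ} (f : Fin n → ℝ) (v : Fin n) :
    act (pathGraph n) f v = (if 0 < (v : ℕ) then f ⟨v - 1, by omega⟩ else 0)
      + (if h : (v : ℕ) + 1 < n then f ⟨v + 1, h⟩ else 0) := by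
  have key : ∀ u, (if (pathGraph n).Adj v u then f u else 0)
      = (if (u : ℕ) + 1 = v then f u else 0) + (if (v : ℕ) + 1 = u then f u else 0) := by
    intro u
    simp only [pathGraph_adj]
    by_cases h1 : (u : ℕ) + 1 = v
    · have h2 : ¬ ((v : ℕ) + 1 = u) := by omega
      simp [h1, h2]
    · simp [h1]
  unfold act
  simp only [key]
  rw [Finset.sum_add_distrib]
  congr 1
  · split_ifs with h
    · rw [Finset.sum_eq_single (⟨v - 1, by omega⟩ : Fin n)]
      · rw [if_pos]; simp only; omega
      · intro b _ hb
        rw [if_neg]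
        intro h'
        apply hb
        ext; simp only; omega
      · simp
    · refine Finset.sum_eq_zero fun u _ => ?_
      rw [if_neg]; omega
  · split_ifs with h
    · rw [Finset.sum_eq_single (⟨v + 1, h⟩ : Fin n)]
      · simp
      · intro b _ hb
        rw [if_neg]
        intro h'
        apply hb
        ext; simp only; omega
      · simp
    · refine Finset.sum_eq_zero fun u _ => ?_
      rw [if_neg]; have := u.2; omega

lemma path_facts {n : ℕ} (hn : 5 ≤ n) [DecidableRel (pathGraph n)ᶜ.Adj] (lam : ℝ)
    (h : IsGreatest (spectrum ℝ ((pathGraph n)ᶜ.adjMatrix ℝ)) lam) :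
    ∃ z0 zl z1 zk : ℝ, 0 ≤ z0 ∧ 0 ≤ zl ∧ (lam + 1) + 2 - z0 - zl = n ∧
      (lam + 1) * z0 + z1 = 1 ∧ (lam + 1) * zl + zk = 1 ∧
      (lam + 1) - 2 ≤ (lam + 1) ^ 2 * z1 ∧ (lam + 1) - 2 ≤ (lam + 1) ^ 2 * zk := by
  obtain ⟨x, hx0, ⟨w0, hw0⟩, hx⟩ := perron (pathGraph n) lam h
  have hS : 0 < ∑ u, x u := Finset.sum_pos' (fun v _ => hx0 v) ⟨w0, Finset.mem_univ _, hw0⟩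
  obtain ⟨z, hz⟩ : ∃ z : Fin n → ℝ, z = fun v => x v / ∑ u, x u := ⟨_, rfl⟩
  have hz0 : ∀ v, 0 ≤ z v := by
    intro v; rw [hz]; exact div_nonneg (hx0 v) hS.le
  have hz1 : ∑ v, z v = 1 := by
    rw [hz, ← Finset.sum_div]; exact div_self hS.ne'
  have hact : ∀ v, act (pathGraph n) z v = act (pathGraph n) x v / ∑ u, x u := by
    intro v
    rw [hz]
    unfold act
    rw [Finset.sum_div]
    refine Finset.sum_congr rfl fun u _ => ?_
    split_ifs <;> simp
  have he : ∀ v, (lam + 1) * z v + act (pathGraph n) z v = 1 := by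
    intro v
    rw [hact, hz]
    have := hx v
    field_simp
    linarith
  have hactnn : ∀ v, 0 ≤ act (pathGraph n) z v := by
    intro v
    unfold act
    refine Finset.sum_nonneg fun u _ => ?_
    split_ifs
    · exact hz0 u
    · exact le_rfl
  have hle : ∀ v, (lam + 1) * z v ≤ 1 := by
    intro v
    linarith [he v, hactnn v]
  have hsum : (lam + 1) + 2 - z ⟨0, by omega⟩ - z ⟨n - 1, by omega⟩ = n := by
    have e1 : ∑ v, ((lam + 1) * z v + act (pathGraph n) z v) = (n : ℝ) := by
      simp [he]
    rw [Finset.sum_add_distrib, ← Finset.mul_sum, hz1, sum_act] at e1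
    have e2 : ∀ u : Fin n, z u * act (pathGraph n) (fun _ => 1) u
        = 2 * z u - (if u = ⟨0, by omega⟩ then z u else 0)
          - (if u = ⟨n - 1, by omega⟩ then z u else 0) := by
      intro u
      rw [act_path]
      simp only [Fin.ext_iff]
      have := u.2
      by_cases h1 : (u : ℕ) = 0
      · have h2 : ¬ ((u : ℕ) = n - 1) := by omega
        have h3 : (u : ℕ) + 1 < n := by omega
        have h4 : ¬ (0 < (u : ℕ)) := by omega
        rw [if_neg h4, dif_pos h3, if_pos h1, if_neg h2]; ring
      · have h4 : (0 < (u : ℕ)) := by omega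
        by_cases h2 : (u : ℕ) = n - 1
        · have h3 : ¬ ((u : ℕ) + 1 < n) := by omega
          rw [if_pos h4, dif_neg h3, if_neg h1, if_pos h2]; ring
        · have h3 : (u : ℕ) + 1 < n := by omega
          rw [if_pos h4, dif_pos h3, if_neg h1, if_neg h2]; ring
    simp only [e2] at e1
    rw [Finset.sum_sub_distrib, Finset.sum_sub_distrib, ← Finset.mul_sum, hz1] at e1
    simp only [Finset.sum_ite_eq', Finset.mem_univ, if_true] at e1
    linarith
  have hn' : (5 : ℝ) ≤ n := by exact_mod_cast hn
  have hmu : 3 ≤ lam + 1 := by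
    have := hz0 ⟨0, by omega⟩
    have := hz0 ⟨n - 1, by omega⟩
    linarith
  have a0 : act (pathGraph n) z ⟨0, by omega⟩ = z ⟨1, by omega⟩ := by
    rw [act_path, if_neg (by simp), dif_pos (show 0 + 1 < n by omega)]
    simp
  have al : act (pathGraph n) z ⟨n - 1, by omega⟩ = z ⟨n - 2, by omega⟩ := by
    rw [act_path, if_pos (show 0 < n - 1 by omega),
      dif_neg (show ¬ (n - 1 + 1 < n) by omega), add_zero]
    congr 1
  have a1 : act (pathGraph n) z ⟨1, by omega⟩ = z ⟨0, by omega⟩ + z ⟨2, by omega⟩ := by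
    rw [act_path, if_pos (show 0 < 1 by omega), dif_pos (show 1 + 1 < n by omega)]
    rfl
  have ak : act (pathGraph n) z ⟨n - 2, by omega⟩ = z ⟨n - 3, by omega⟩ + z ⟨n - 1, by omega⟩ := by
    rw [act_path, if_pos (show 0 < n - 2 by omega), dif_pos (show n - 2 + 1 < n by omega)]
    congr 2
    ext; simp only; omega
  refine ⟨z ⟨0, by omega⟩, z ⟨n - 1, by omega⟩, z ⟨1, by omega⟩, z ⟨n - 2, by omega⟩,
    hz0 _, hz0 _, hsum, ?_, ?_, ?_, ?_⟩
  · rw [← a0]; exact he _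
  · rw [← al]; exact he _
  · have h1 := he ⟨1, by omega⟩
    rw [a1] at h1
    have h2 := hle ⟨0, by omega⟩
    have h3 := hle ⟨2, by omega⟩
    have h4 := congrArg (fun t => (lam + 1) * t) h1
    nlinarith
  · have h1 := he ⟨n - 2, by omega⟩
    rw [ak] at h1
    have h2 := hle ⟨n - 3, by omega⟩
    have h3 := hle ⟨n - 1, by omega⟩
    have h4 := congrArg (fun t => (lam + 1) * t) h1
    nlinarith

lemma leaf_leaf {n : ℕ} (hn : 3 ≤ n) (T : SimpleGraph (Fin n)) (hc : T.Connected) (u v : Fin n)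
    (h : T.Adj u v) (hu : T.degree u = 1) (hv : T.degree v = 1) : False := by
  obtain ⟨w, hw⟩ : ∃ w, w ∉ ({u, v} : Finset (Fin n)) := by
    by_contra hcon
    push Not at hcon
    have h1 : (Finset.univ : Finset (Fin n)) ⊆ {u, v} := fun x _ => hcon x
    have h2 := Finset.card_le_card h1
    have h3 := Finset.card_le_two (a := u) (b := v)
    rw [Finset.card_univ, Fintype.card_fin] at h2
    omega
  obtain ⟨p⟩ := hc.preconnected u w
  obtain ⟨d, _, h1, h2⟩ := p.exists_boundary_dart ({u, v} : Set (Fin n)) (by simp)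
    (by simpa using hw)
  have hone : ∀ a b c : Fin n, T.degree a = 1 → T.Adj a b → T.Adj a c → b = c := by
    intro a b c ha hb hc
    rw [← SimpleGraph.card_neighborFinset_eq_degree] at ha
    exact Finset.card_le_one.1 ha.le b (by simpa using hb) c (by simpa using hc)
  simp only [Set.mem_insert_iff, Set.mem_singleton_iff, not_or] at h1 h2
  have hd := d.adj
  rcases h1 with h1 | h1
  · rw [h1] at hd
    exact h2.2 (hone _ _ _ hu hd h)
  · rw [h1] at hd
    exact h2.1 (hone _ _ _ hv hd h.symm)

lemma aux_half (m a z : ℝ) (hm : 3 ≤ m) (ha : a * (m + 2) = 1) (ha0 : 0 < a)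
    (h : m - 2 ≤ m ^ 2 * z) : a / 2 < z := by
  have h2 : m ^ 2 * 1 < m ^ 2 * (2 * (m + 2) * z) := by
    have h3 : 2 * (m + 2) * (m - 2) ≤ 2 * (m + 2) * (m ^ 2 * z) :=
      mul_le_mul_of_nonneg_left h (by linarith)
    nlinarith
  have i1 : 1 < 2 * (m + 2) * z := lt_of_mul_lt_mul_left h2 (by positivity)
  have h4 := mul_lt_mul_of_pos_left i1 ha0
  have h5 : a * (2 * (m + 2) * z) = 2 * z * (a * (m + 2)) := by ring
  rw [h5, ha] at h4
  linarith

set_option maxHeartbeats 1000000 in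
lemma path_lt {n : ℕ} (hn : 5 ≤ n) (T : SimpleGraph (Fin n)) [DecidableRel Tᶜ.Adj]
    [DecidableRel (pathGraph n)ᶜ.Adj] (hT : T.IsTree) (h3 : ∃ v, 3 ≤ T.degree v) (lamP lamT : ℝ)
    (hlamP : IsGreatest (spectrum ℝ ((pathGraph n)ᶜ.adjMatrix ℝ)) lamP)
    (hlamT : IsGreatest (spectrum ℝ (Tᶜ.adjMatrix ℝ)) lamT) : lamP < lamT := by
  obtain ⟨z0, zl, z1, zk, hz0, hzl, hsum, h0, hl, h1, hk⟩ := path_facts hn lamP hlamP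
  obtain ⟨m, hm⟩ : ∃ m, m = lamP + 1 := ⟨_, rfl⟩
  rw [← hm] at hsum h0 hl h1 hk
  have hn' : (5 : ℝ) ≤ n := by exact_mod_cast hn
  have hm3 : 3 ≤ m := by linarith
  have hmn : (n : ℝ) - 2 ≤ m := by linarith
  have : Nontrivial (Fin n) := Fin.nontrivial_iff_two_le.2 (by omega)
  obtain ⟨e, he⟩ : ∃ e : Fin n → ℝ, e = fun v => (T.degree v : ℝ) - 2 := ⟨_, rfl⟩
  have hev : ∀ v, e v = (T.degree v : ℝ) - 2 := fun v => by rw [he]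
  have hdp : ∀ v, 1 ≤ T.degree v := fun v => hT.1.preconnected.degree_pos_of_nontrivial v
  obtain ⟨p, hp⟩ : ∃ p : Fin n → ℝ, p = fun v => max (e v) 0 := ⟨_, rfl⟩
  have hp0 : ∀ v, 0 ≤ p v := fun v => by rw [hp]; exact le_max_right _ _
  have hcase : ∀ v, (T.degree v = 1 ∧ e v = -1 ∧ p v = 0) ∨ (0 ≤ e v ∧ p v = e v ∧ e v ≤ e v ^ 2) := by
    intro v
    rcases (hdp v).eq_or_lt with h | h
    · left
      have : e v = -1 := by rw [hev, ← h]; norm_num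
      refine ⟨h.symm, this, ?_⟩
      rw [hp]; simp [this]
    · right
      obtain ⟨k, hk⟩ := Nat.exists_eq_add_of_le h
      have : e v = k := by rw [hev, hk]; push_cast; ring
      have hk0 : (0 : ℝ) ≤ k := Nat.cast_nonneg k
      refine ⟨by rw [this]; exact hk0, by rw [hp]; simp [this], ?_⟩
      rw [this]
      exact_mod_cast Nat.le_self_pow (by norm_num) k
  have hdeg : ∑ v, (T.degree v : ℝ) = 2 * ((n : ℝ) - 1) := by
    have q1 := T.sum_degrees_eq_twice_card_edges
    have q2 := hT.card_edgeFinset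
    rw [Fintype.card_fin] at q2
    have q3 : (∑ v, (T.degree v : ℝ)) = 2 * (T.edgeFinset.card : ℝ) := by exact_mod_cast q1
    have q4 : (T.edgeFinset.card : ℝ) + 1 = n := by exact_mod_cast q2
    rw [q3]; linarith
  have hesum : ∑ v, e v = -2 := by
    simp only [hev]
    rw [Finset.sum_sub_distrib, hdeg]
    simp; ring
  obtain ⟨s, hs⟩ : ∃ s, s = ∑ v, p v := ⟨_, rfl⟩
  obtain ⟨E, hE⟩ : ∃ E, E = ∑ v, e v ^ 2 := ⟨_, rfl⟩
  obtain ⟨Q, hQ⟩ : ∃ Q, Q = ∑ v, e v * act T e v := ⟨_, rfl⟩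
  have hs1 : 1 ≤ s := by
    obtain ⟨v, hv⟩ := h3
    have hv' : (3 : ℝ) ≤ T.degree v := by exact_mod_cast hv
    have : 1 ≤ p v := by
      rw [hp]; refine le_trans ?_ (le_max_left _ _); rw [hev]; linarith
    rw [hs]
    exact this.trans (Finset.single_le_sum (fun u _ => hp0 u) (Finset.mem_univ v))
  have hsn : s ≤ m := by
    have : ∑ v, p v ≤ ∑ v, (e v + 1) := by
      refine Finset.sum_le_sum fun v _ => ?_
      rcases hcase v with ⟨_, h2, h3⟩ | ⟨_, h2, _⟩ <;> linarith
    rw [Finset.sum_add_distrib, hesum] at this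
    simp at this
    linarith
  have hEs : 2 * s + 2 ≤ E := by
    have : ∑ v, (2 * p v - e v) ≤ ∑ v, e v ^ 2 := by
      refine Finset.sum_le_sum fun v _ => ?_
      rcases hcase v with ⟨_, h2, h3⟩ | ⟨_, h2, h3⟩
      · rw [h2, h3]; norm_num
      · linarith
    rw [Finset.sum_sub_distrib, ← Finset.mul_sum, hesum] at this
    linarith
  have hQs : Q ≤ s ^ 2 := by
    rw [hQ, hs, sq, Finset.sum_mul]
    refine Finset.sum_le_sum fun u _ => ?_
    unfold act
    rw [Finset.mul_sum, Finset.mul_sum]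
    refine Finset.sum_le_sum fun v _ => ?_
    have hpp := mul_nonneg (hp0 u) (hp0 v)
    split_ifs with hadj
    · rcases hcase u with ⟨h1, h2, h3⟩ | ⟨h1, h2, h3⟩ <;>
        rcases hcase v with ⟨h1', h2', h3'⟩ | ⟨h1', h2', h3'⟩
      · exact (leaf_leaf (by omega) T hT.1 u v hadj h1 h1').elim
      · rw [h2, h3]; linarith
      · rw [h2', h3']; linarith
      · rw [h2, h2']
    · simpa using hpp
  -- the test vector
  obtain ⟨a, ha⟩ : ∃ a, a = 1 / (m + 2) := ⟨_, rfl⟩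
  obtain ⟨b, hb⟩ : ∃ b, b = 1 / (m * (m + 2)) := ⟨_, rfl⟩
  have ha0 : 0 < a := by rw [ha]; positivity
  have hb0 : 0 < b := by rw [hb]; positivity
  have hbm : b * m = a := by rw [ha, hb]; field_simp
  have ham : a * (m + 2) = 1 := by rw [ha]; field_simp
  by_contra hle
  push Not at hle
  have hr := rayleigh T lamT hlamT (fun v => a - b * e v)
  have y1 : ∑ v, (a - b * e v) = a * n + 2 * b := by
    rw [Finset.sum_sub_distrib, ← Finset.mul_sum, hesum]
    simp; ring
  have y2 : ∑ v, (a - b * e v) ^ 2 = a ^ 2 * n + 4 * a * b + b ^ 2 * E := by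
    have : ∀ v, (a - b * e v) ^ 2 = a ^ 2 - 2 * a * b * e v + b ^ 2 * e v ^ 2 := fun v => by ring
    simp only [this]
    rw [Finset.sum_add_distrib, Finset.sum_sub_distrib, ← Finset.mul_sum, ← Finset.mul_sum, hesum,
      ← hE]
    simp; ring
  have yact : ∀ v, act T (fun v => a - b * e v) v = a * (e v + 2) - b * act T e v := by
    intro v
    have e1 : e v + 2 = act T (fun _ => 1) v := by rw [act_one, hev]; ring
    rw [e1]
    unfold act
    rw [Finset.mul_sum, Finset.mul_sum, ← Finset.sum_sub_distrib]
    refine Finset.sum_congr rfl fun u _ => ?_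
    split_ifs <;> simp
  have hae : ∑ v, act T e v = E - 4 := by
    rw [sum_act]
    have : ∀ v, e v * act T (fun _ => 1) v = e v ^ 2 + 2 * e v := by
      intro v; rw [act_one]
      have := hev v
      have : (T.degree v : ℝ) = e v + 2 := by linarith
      rw [this]; ring
    simp only [this]
    rw [Finset.sum_add_distrib, ← Finset.mul_sum, hesum, ← hE]; ring
  have y3 : ∑ v, (a - b * e v) * act T (fun v => a - b * e v) v
      = 2 * a ^ 2 * (n - 1) - 2 * a * b * (E - 4) + b ^ 2 * Q := by
    have : ∀ v, (a - b * e v) * act T (fun v => a - b * e v) v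
        = a ^ 2 * e v + 2 * a ^ 2 - a * b * act T e v - a * b * e v ^ 2 - 2 * a * b * e v
          + b ^ 2 * (e v * act T e v) := by
      intro v; rw [yact]; ring
    simp only [this]
    rw [Finset.sum_add_distrib, Finset.sum_sub_distrib, Finset.sum_sub_distrib,
      Finset.sum_sub_distrib, Finset.sum_add_distrib, ← Finset.mul_sum, ← Finset.mul_sum,
      ← Finset.mul_sum, ← Finset.mul_sum, ← Finset.mul_sum,
      ← Finset.mul_sum (f := fun v => e v * act T e v),
      hesum, hae, ← hE, ← hQ]
    simp; ring
  rw [y2, y3] at hr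
  simp only [y1] at hr
  have hEn : 0 ≤ a ^ 2 * n + 4 * a * b + b ^ 2 * E := by
    rw [← y2]; exact Finset.sum_nonneg fun v _ => sq_nonneg _
  have hr2 : (lamT + 1) * (a ^ 2 * n + 4 * a * b + b ^ 2 * E)
      ≤ m * (a ^ 2 * n + 4 * a * b + b ^ 2 * E) :=
    mul_le_mul_of_nonneg_right (by linarith) hEn
  have hident : 2 * (a * n + 2 * b) - 1 - (m * (a ^ 2 * n + 4 * a * b + b ^ 2 * E)
      + (2 * a ^ 2 * (n - 1) - 2 * a * b * (E - 4) + b ^ 2 * Q))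
      = b * (a * (E - 4) - b * Q + z1 + zk) := by
    have i1 : z1 = 1 - m * z0 := by linarith
    have i2 : zk = 1 - m * zl := by linarith
    rw [i1, i2, ← hsum, ha, hb]
    have : m ≠ 0 := by linarith
    have : m + 2 ≠ 0 := by linarith
    field_simp
    ring
  have hz1a : a / 2 < z1 := aux_half m a z1 hm3 ham ha0 h1
  have hzka : a / 2 < zk := aux_half m a zk hm3 ham ha0 hk
  have hbQ : b * Q ≤ a * s := by
    have i1 : b * Q ≤ b * s ^ 2 := mul_le_mul_of_nonneg_left hQs hb0.le
    have i2 : b * s ^ 2 ≤ b * (m * s) := by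
      apply mul_le_mul_of_nonneg_left _ hb0.le
      nlinarith
    rw [← hbm]; linarith
  have haE : a * (2 * s - 2) ≤ a * (E - 4) := mul_le_mul_of_nonneg_left (by linarith) ha0.le
  have has : a * 1 ≤ a * s := mul_le_mul_of_nonneg_left hs1 ha0.le
  have hfin : 0 < b * (a * (E - 4) - b * Q + z1 + zk) := by
    apply mul_pos hb0
    linarith
  have hsq := sq_nonneg (a * n + 2 * b - 1)
  have hsq2 : (a * n + 2 * b - 1) ^ 2 = (a * n + 2 * b) ^ 2 - 2 * (a * n + 2 * b) + 1 := by ring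
  linarith

lemma iso_path {n : ℕ} (hn : 5 ≤ n) (T : SimpleGraph (Fin n)) (hT : T.IsTree)
    (h3 : ∀ v, T.degree v ≤ 2) : Nonempty (T ≃g pathGraph n) := by
  have : Nontrivial (Fin n) := Fin.nontrivial_iff_two_le.2 (by omega)
  have hc := hT.1
  obtain ⟨r, hr⟩ : ∃ r, T.degree r = 1 := by
    by_contra hcon
    push Not at hcon
    have hdp : ∀ v, 2 ≤ T.degree v := fun v => by
      have := hT.1.preconnected.degree_pos_of_nontrivial v
      have := hcon v
      omega
    have q1 := T.sum_degrees_eq_twice_card_edges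
    have q2 := hT.card_edgeFinset
    rw [Fintype.card_fin] at q2
    have : ∑ v : Fin n, 2 ≤ ∑ v, T.degree v := Finset.sum_le_sum fun v _ => hdp v
    simp at this
    omega
  have huniq : ∀ k u v, T.dist r u = k → T.dist r v = k → u = v := by
    intro k
    induction k using Nat.strong_induction_on with
    | _ k ih =>
      intro u v hu hv
      by_contra huv
      have hur : u ≠ r := by
        rintro rfl
        simp at hu
        apply huv
        rw [← hu] at hv
        exact hc.dist_eq_zero_iff.1 hv
      have hvr : v ≠ r := by
        rintro rfl
        simp at hv
        apply huv
        rw [← hv] at hu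
        exact (hc.dist_eq_zero_iff.1 hu).symm
      obtain ⟨p, hp, hpd⟩ := exists_par T hc r u hur
      obtain ⟨q, hq, hqd⟩ := exists_par T hc r v hvr
      have hpq : p = q := ih (T.dist r p) (by omega) p q rfl (by omega)
      subst hpq
      by_cases hpr : p = r
      · subst hpr
        rw [← SimpleGraph.card_neighborFinset_eq_degree] at hr
        exact huv (Finset.card_le_one.1 hr.le u (by simpa using hp.symm) v (by simpa using hq.symm))
      · obtain ⟨t, ht, htd⟩ := exists_par T hc r p hpr
        have htu : u ≠ t := by rintro rfl; omega
        have htv : v ≠ t := by rintro rfl; omega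
        have hsub : ({u, v, t} : Finset (Fin n)) ⊆ T.neighborFinset p := by
          intro w hw
          simp only [Finset.mem_insert, Finset.mem_singleton] at hw
          rcases hw with rfl | rfl | rfl
          · simpa using hp.symm
          · simpa using hq.symm
          · simpa using ht
        have h4 := Finset.card_le_card hsub
        rw [Finset.card_eq_three.2 ⟨u, v, t, huv, htu, htv, rfl⟩,
          SimpleGraph.card_neighborFinset_eq_degree] at h4
        have := h3 p
        omega
  have hlt : ∀ v, T.dist r v < n := by
    intro v
    obtain ⟨p, hp, hpl⟩ := hc.exists_path_of_dist r v
    have := hp.length_lt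
    rw [Fintype.card_fin] at this
    omega
  let f : Fin n → Fin n := fun v => ⟨T.dist r v, hlt v⟩
  have hinj : Function.Injective f := by
    intro u v huv
    have : T.dist r u = T.dist r v := congrArg Fin.val huv
    exact huniq _ u v this rfl
  have hbij : Function.Bijective f := Finite.injective_iff_bijective.1 hinj
  have hback : ∀ u v, T.dist r u + 1 = T.dist r v → T.Adj u v := by
    intro u v h
    have hvr : v ≠ r := by rintro rfl; simp at h
    obtain ⟨p, hp, hpd⟩ := exists_par T hc r v hvr
    have : p = u := huniq _ p u rfl (by omega)
    subst this
    exact hp.symm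
  refine ⟨⟨Equiv.ofBijective f hbij, ?_⟩⟩
  intro u v
  simp only [Equiv.ofBijective_apply, pathGraph_adj, f]
  constructor
  · rintro (h | h)
    · exact hback u v h
    · exact (hback v u h).symm
  · intro h
    have hne : T.dist r u ≠ T.dist r v := fun h' => h.ne (huniq _ u v h' rfl)
    have h1 := SimpleGraph.dist_eq_one_iff_adj.2 h
    have h1' := SimpleGraph.dist_eq_one_iff_adj.2 h.symm
    have t1 := hc.dist_triangle (u := r) (v := u) (w := v)
    have t2 := hc.dist_triangle (u := r) (v := v) (w := u)
    omega

lemma path_dich {n : ℕ} (hn : 5 ≤ n) (T : SimpleGraph (Fin n)) [DecidableRel Tᶜ.Adj]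
    [DecidableRel (pathGraph n)ᶜ.Adj] (hT : T.IsTree) (lamP lamT : ℝ)
    (hlamP : IsGreatest (spectrum ℝ ((pathGraph n)ᶜ.adjMatrix ℝ)) lamP)
    (hlamT : IsGreatest (spectrum ℝ (Tᶜ.adjMatrix ℝ)) lamT) :
    lamP < lamT ∨ Nonempty (T ≃g pathGraph n) := by
  by_cases h3 : ∀ v, T.degree v ≤ 2
  · right; exact iso_path hn T hT h3
  · left
    push Not at h3
    obtain ⟨v, hv⟩ := h3
    exact path_lt hn T hT ⟨v, hv⟩ lamP lamT hlamP hlamT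

/-- Among all trees `T` on `n` vertices with diameter `> 3`, the adjacency spectral
radius of the complement is minimized exactly by the path `P_n` and maximized
exactly by `T(n-3,1)`. -/
theorem stmt8 {n : ℕ} (T : SimpleGraph (Fin n)) [DecidableRel T.Adj]
    (hT : T.IsTree) (hd : ∃ u v : Fin n, 3 < T.dist u v)
    (lamP lamT lamB : ℝ)
    (hlamP : IsGreatest (spectrum ℝ ((pathGraph n)ᶜ.adjMatrix ℝ)) lamP)
    (hlamT : IsGreatest (spectrum ℝ (Tᶜ.adjMatrix ℝ)) lamT)
    (hlamB : IsGreatest (spectrum ℝ ((broom n)ᶜ.adjMatrix ℝ)) lamB) :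
    lamP ≤ lamT ∧ lamT ≤ lamB ∧
      (lamP = lamT ↔ Nonempty (T ≃g pathGraph n)) ∧
      (lamT = lamB ↔ Nonempty (T ≃g broom n)) := by
  have hB := broom_lt T hT.1 hd lamT lamB hlamT hlamB
  have hn : 5 ≤ n := by
    obtain ⟨u, v, huv⟩ := hd
    obtain ⟨p, hp, hpl⟩ := hT.1.exists_path_of_dist u v
    have := hp.length_lt
    rw [Fintype.card_fin] at this
    omega
  have hisoP : Nonempty (T ≃g pathGraph n) → lamP = lamT := by
    rintro ⟨e⟩
    exact le_antisymm (iso_top _ _ _ _ hlamP hlamT e.symm) (iso_top _ _ _ _ hlamT hlamP e)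
  have hP := path_dich hn T hT lamP lamT hlamP hlamT
  refine ⟨?_, hB.le, ⟨?_, hisoP⟩, ⟨fun h => absurd h hB.ne, ?_⟩⟩
  · rcases hP with h | h
    · exact h.le
    · exact (hisoP h).le
  · intro h
    rcases hP with h' | h'
    · exact absurd h h'.ne
    · exact h'
  · rintro ⟨e⟩
    exact absurd (iso_top _ _ _ _ hlamB hlamT e.symm) (not_le.2 hB)
end

section
/- Among all trees T on n vertices with diameter greater than 3, the distance spectral radius of the complement satisfies λ_1(D(P_n^c)) ≤ λ_1(D(T^c)) ≤ λ_1(D(T(n−3,1)^c)), with equality on the left iff T ≅ P_n and on the right iff T ≅ T(n−3,1). -/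
open Matrix SimpleGraph
open scoped Classical

/-- The distance matrix of a simple graph, with real entries. -/
noncomputable def distMatrix {n : ℕ} (G : SimpleGraph (Fin n)) : Matrix (Fin n) (Fin n) ℝ :=
  fun i j => (G.dist i j : ℝ)

/-- Symmetry of the distance matrix. -/
lemma distMatrix_herm {n : ℕ} (G : SimpleGraph (Fin n)) : (distMatrix G).IsHermitian := by
  ext i j
  simp [distMatrix, SimpleGraph.dist_comm]

lemma psd_of_greatest {n : ℕ} {M : Matrix (Fin n) (Fin n) ℝ} (hM : M.IsHermitian) {l : ℝ}
    (hl : IsGreatest (spectrum ℝ M) l) : (algebraMap ℝ _ l - M).PosSemidef := by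
  have hH : (algebraMap ℝ (Matrix (Fin n) (Fin n) ℝ) l - M).IsHermitian := by
    apply IsHermitian.sub _ hM
    rw [Algebra.algebraMap_eq_smul_one]
    ext i j
    simp [Matrix.one_apply, eq_comm]
  rw [hH.posSemidef_iff_eigenvalues_nonneg]
  intro i
  have h := hH.eigenvalues_mem_spectrum_real i
  rw [← spectrum.singleton_sub_eq] at h
  obtain ⟨a, ha, b, hb, hab⟩ := h
  have := hl.2 hb
  simp only [Set.mem_singleton_iff] at ha
  subst ha
  simp only at hab
  simp only [Pi.zero_apply]
  linarith

lemma algebraMap_mulVec' {n : ℕ} (l : ℝ) (y : Fin n → ℝ) :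
    (algebraMap ℝ (Matrix (Fin n) (Fin n) ℝ) l) *ᵥ y = l • y := by
  rw [Algebra.algebraMap_eq_smul_one, smul_mulVec, one_mulVec]

lemma rayleigh_le {n : ℕ} {M : Matrix (Fin n) (Fin n) ℝ} (hM : M.IsHermitian) {l : ℝ}
    (hl : IsGreatest (spectrum ℝ M) l) (y : Fin n → ℝ) : y ⬝ᵥ (M *ᵥ y) ≤ l * (y ⬝ᵥ y) := by
  have := (psd_of_greatest hM hl).dotProduct_mulVec_nonneg y
  rw [sub_mulVec, algebraMap_mulVec', dotProduct_sub, dotProduct_smul] at this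
  simpa using this

lemma rayleigh_eq_s9 {n : ℕ} {M : Matrix (Fin n) (Fin n) ℝ} (hM : M.IsHermitian) {l : ℝ}
    (hl : IsGreatest (spectrum ℝ M) l) (y : Fin n → ℝ) (h : l * (y ⬝ᵥ y) ≤ y ⬝ᵥ (M *ᵥ y)) :
    M *ᵥ y = l • y := by
  have h1 := (psd_of_greatest hM hl).dotProduct_mulVec_zero_iff y
  have h2 := rayleigh_le hM hl y
  have h3 : star y ⬝ᵥ ((algebraMap ℝ _ l - M) *ᵥ y) = 0 := by
    rw [sub_mulVec, algebraMap_mulVec', dotProduct_sub, dotProduct_smul]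
    simp
    linarith
  have h4 := h1.1 h3
  rw [sub_mulVec, algebraMap_mulVec'] at h4
  exact (sub_eq_zero.1 h4).symm

lemma exists_eigvec {n : ℕ} {M : Matrix (Fin n) (Fin n) ℝ} {l : ℝ}
    (hl : l ∈ spectrum ℝ M) : ∃ x : Fin n → ℝ, x ≠ 0 ∧ M *ᵥ x = l • x := by
  rw [spectrum.mem_iff, Matrix.isUnit_iff_isUnit_det, isUnit_iff_ne_zero, not_not] at hl
  obtain ⟨x, hx, h⟩ := Matrix.exists_mulVec_eq_zero_iff.2 hl
  rw [sub_mulVec, algebraMap_mulVec'] at h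
  exact ⟨x, hx, (sub_eq_zero.1 h).symm⟩

/-- Real adjacency matrix, with classical decidability. -/
noncomputable def adjR {n : ℕ} (G : SimpleGraph (Fin n)) : Matrix (Fin n) (Fin n) ℝ :=
  fun i j => if G.Adj i j then 1 else 0

lemma adjR_symm {n : ℕ} (G : SimpleGraph (Fin n)) (i j : Fin n) : adjR G i j = adjR G j i := by
  simp [adjR, G.adj_comm]

lemma adjR_transpose {n : ℕ} (G : SimpleGraph (Fin n)) : (adjR G)ᵀ = adjR G := by
  ext i j
  exact adjR_symm G j i

/-- The condition under which the complement has diameter at most two. -/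
def Good {n : ℕ} (G : SimpleGraph (Fin n)) : Prop :=
  ∀ u v, G.Adj u v → ∃ w, w ≠ u ∧ w ≠ v ∧ ¬ G.Adj u w ∧ ¬ G.Adj v w

lemma distMatrix_good {n : ℕ} {G : SimpleGraph (Fin n)} (h : Good G) (i j : Fin n) :
    distMatrix Gᶜ i j = 1 - (if i = j then 1 else 0) + adjR G i j := by
  unfold distMatrix adjR
  by_cases hij : i = j
  · subst hij; simp
  by_cases ha : G.Adj i j
  · obtain ⟨w, h1, h2, h3, h4⟩ := h i j ha
    have e1 : Gᶜ.Adj i w := ⟨h1.symm, h3⟩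
    have e2 : Gᶜ.Adj w j := ⟨h2, fun h => h4 h.symm⟩
    have hle : Gᶜ.dist i j ≤ 2 := SimpleGraph.dist_le (.cons e1 (.cons e2 .nil))
    have hr : Gᶜ.Reachable i j := e1.reachable.trans e2.reachable
    have h1 := hr.one_lt_dist_of_ne_of_not_adj hij (fun h => h.2 ha)
    have : Gᶜ.dist i j = 2 := by omega
    rw [this]; simp [hij, ha]; norm_num
  · have : Gᶜ.dist i j = 1 := dist_eq_one_iff_adj.2 ⟨hij, ha⟩
    rw [this]; simp [hij, ha]

lemma dist_mulVec {n : ℕ} {G : SimpleGraph (Fin n)} (h : Good G) (y : Fin n → ℝ) (i : Fin n) :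
    (distMatrix Gᶜ *ᵥ y) i = (∑ j, y j) - y i + (adjR G *ᵥ y) i := by
  simp only [mulVec, dotProduct, distMatrix_good h]
  simp [add_mul, sub_mul, Finset.sum_add_distrib, Finset.sum_sub_distrib]

lemma dist_quad {n : ℕ} {G : SimpleGraph (Fin n)} (h : Good G) (y : Fin n → ℝ) :
    y ⬝ᵥ (distMatrix Gᶜ *ᵥ y) = (∑ j, y j) ^ 2 - y ⬝ᵥ y + y ⬝ᵥ (adjR G *ᵥ y) := by
  simp only [dotProduct, dist_mulVec h]
  simp only [mul_add, mul_sub, Finset.sum_add_distrib, Finset.sum_sub_distrib, ← Finset.sum_mul]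
  ring

lemma adj_swap {n : ℕ} (G : SimpleGraph (Fin n)) (x y : Fin n → ℝ) :
    x ⬝ᵥ (adjR G *ᵥ y) = (adjR G *ᵥ x) ⬝ᵥ y := by
  rw [dotProduct_mulVec, ← mulVec_transpose, adjR_transpose]

/-- Degree vector. -/
noncomputable def degR {n : ℕ} (G : SimpleGraph (Fin n)) : Fin n → ℝ := adjR G *ᵥ 1

/-- Sum of squared degrees. -/
noncomputable def qR {n : ℕ} (G : SimpleGraph (Fin n)) : ℝ := degR G ⬝ᵥ degR G

/-- Number of walks of length three. -/
noncomputable def wR {n : ℕ} (G : SimpleGraph (Fin n)) : ℝ := degR G ⬝ᵥ (adjR G *ᵥ degR G)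

lemma lower_core {n : ℕ} (G : SimpleGraph (Fin n)) (t : ℝ)
    (h : ∀ y : Fin n → ℝ, (∑ j, y j) ^ 2 + y ⬝ᵥ (adjR G *ᵥ y) ≤ t * (y ⬝ᵥ y)) :
    n * t ^ 3 + (∑ i, degR G i) * t ^ 2 + qR G * t + wR G ≤ t ^ 4 := by
  have h1 := h (t • 1 + degR G)
  have e0 : ∑ j, (t • (1 : Fin n → ℝ) + degR G) j = n * t + ∑ i, degR G i := by
    simp [Finset.sum_add_distrib]
  have e1 : adjR G *ᵥ (t • 1 + degR G) = t • degR G + adjR G *ᵥ degR G := by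
    rw [mulVec_add, mulVec_smul]; rfl
  have e2 : (1 : Fin n → ℝ) ⬝ᵥ (adjR G *ᵥ degR G) = qR G := by
    rw [adj_swap]; rfl
  have e3 : (1 : Fin n → ℝ) ⬝ᵥ degR G = ∑ i, degR G i := one_dotProduct _
  have e4 : degR G ⬝ᵥ 1 = ∑ i, degR G i := dotProduct_one _
  have e5 : (1 : Fin n → ℝ) ⬝ᵥ 1 = n := by simp
  rw [e0, e1] at h1
  simp only [add_dotProduct, dotProduct_add, smul_dotProduct, dotProduct_smul, e2, e3, e4, e5,
    smul_eq_mul] at h1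
  change _ + (_ + (_ + wR G)) ≤ t * (_ + (_ + qR G)) at h1
  have e6 : degR G ⬝ᵥ degR G = qR G := rfl
  rw [e6] at h1
  nlinarith [sq_nonneg (n * t + (∑ i, degR G i) - t ^ 2)]

lemma adjR_nonneg {n : ℕ} (G : SimpleGraph (Fin n)) (i j) : 0 ≤ adjR G i j := by
  unfold adjR; split_ifs <;> norm_num

lemma mulVec_nonneg' {n : ℕ} (G : SimpleGraph (Fin n)) {z : Fin n → ℝ} (hz : ∀ i, 0 ≤ z i) (i) :
    0 ≤ (adjR G *ᵥ z) i := by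
  simp only [mulVec, dotProduct]
  exact Finset.sum_nonneg fun j _ => mul_nonneg (adjR_nonneg G i j) (hz j)

lemma degR_apply {n : ℕ} (G : SimpleGraph (Fin n)) (i) : degR G i = ∑ j, adjR G i j := by
  simp [degR, mulVec, dotProduct]

lemma pos_core {n : ℕ} (G : SimpleGraph (Fin n)) (hd : ∀ i, degR G i ≤ 2) (t : ℝ) (ht : 2 < t)
    (z : Fin n → ℝ) (c : ℝ) (hc : 0 ≤ c) (hz : ∀ i, t * z i = c + (adjR G *ᵥ z) i) (i) :
    0 ≤ z i := by
  obtain ⟨k, -, hk⟩ := Finset.exists_min_image Finset.univ z ⟨i, Finset.mem_univ i⟩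
  have hk' := fun j => hk j (Finset.mem_univ j)
  by_contra hneg
  push Not at hneg
  have hk0 : z k < 0 := (hk' i).trans_lt hneg
  have h1 : degR G k * z k ≤ (adjR G *ᵥ z) k := by
    rw [degR_apply, Finset.sum_mul]
    exact Finset.sum_le_sum fun j _ => mul_le_mul_of_nonneg_left (hk' j) (adjR_nonneg G k j)
  have := hz k
  nlinarith [hd k]

lemma upper_core {n : ℕ} (G : SimpleGraph (Fin n)) (hd : ∀ i, degR G i ≤ 2) (t : ℝ) (ht : 2 < t)
    (x : Fin n → ℝ) (hx0 : x ≠ 0) (hx : ∀ i, t * x i = (∑ j, x j) + (adjR G *ᵥ x) i) :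
    t ^ 3 * (t - 2) ≤ (t - 2) * (n * t ^ 2 + (∑ i, degR G i) * t + qR G) + wR G := by
  have hs : ∑ j, x j ≠ 0 := by
    intro hs
    apply hx0
    ext i
    have h1 := pos_core G hd t ht x 0 le_rfl (by intro i; rw [hx i, hs]) i
    have h2 := pos_core G hd t ht (-x) 0 le_rfl
      (by intro i; rw [mulVec_neg]; simp only [Pi.neg_apply, mul_neg]; rw [hx i, hs]; ring) i
    simp only [Pi.neg_apply] at h2
    simp only [Pi.zero_apply]
    linarith
  obtain ⟨z, hz⟩ : ∃ z : Fin n → ℝ, z = (∑ j, x j)⁻¹ • x := ⟨_, rfl⟩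
  have hz1 : ∑ j, z j = 1 := by
    rw [hz]; simp only [Pi.smul_apply, smul_eq_mul, ← Finset.mul_sum]; exact inv_mul_cancel₀ hs
  have hze : t • z = 1 + adjR G *ᵥ z := by
    ext i
    rw [hz, mulVec_smul]
    simp only [Pi.add_apply, Pi.smul_apply, smul_eq_mul, Pi.one_apply]
    rw [mul_left_comm, hx i, mul_add, inv_mul_cancel₀ hs]
  have hz0 : ∀ i, 0 ≤ z i := pos_core G hd t ht z 1 zero_le_one (fun i => congrFun hze i)
  obtain ⟨z1, h1⟩ : ∃ z1, z1 = adjR G *ᵥ z := ⟨_, rfl⟩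
  obtain ⟨z2, h2⟩ : ∃ z2, z2 = adjR G *ᵥ z1 := ⟨_, rfl⟩
  obtain ⟨z3, h3⟩ : ∃ z3, z3 = adjR G *ᵥ z2 := ⟨_, rfl⟩
  have p1 : ∀ i, 0 ≤ z1 i := by rw [h1]; exact mulVec_nonneg' G hz0
  have p2 : ∀ i, 0 ≤ z2 i := by rw [h2]; exact mulVec_nonneg' G p1
  have p3 : ∀ i, 0 ≤ z3 i := by rw [h3]; exact mulVec_nonneg' G p2
  rw [← h1] at hze
  have q1 : t • z1 = degR G + z2 := by
    rw [h2, h1, ← mulVec_smul, hze, mulVec_add, ← h1]; rfl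
  have q2 : t • z2 = adjR G *ᵥ degR G + z3 := by
    rw [h3, h2, ← mulVec_smul, q1, mulVec_add, ← h2]
  have q3 : t • z3 = adjR G *ᵥ (adjR G *ᵥ degR G) + adjR G *ᵥ z3 := by
    rw [h3, ← mulVec_smul, q2, mulVec_add, ← h3]
  have hz1' : (1 : Fin n → ℝ) ⬝ᵥ z = 1 := by rw [one_dotProduct, hz1]
  have s0 := congrArg (fun v => (1 : Fin n → ℝ) ⬝ᵥ v) hze
  have s1 := congrArg (fun v => (1 : Fin n → ℝ) ⬝ᵥ v) q1
  have s2 := congrArg (fun v => (1 : Fin n → ℝ) ⬝ᵥ v) q2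
  have s3 := congrArg (fun v => (1 : Fin n → ℝ) ⬝ᵥ v) q3
  have e2 : (1 : Fin n → ℝ) ⬝ᵥ (adjR G *ᵥ degR G) = qR G := by
    rw [adj_swap]; rfl
  have e3 : (1 : Fin n → ℝ) ⬝ᵥ (adjR G *ᵥ (adjR G *ᵥ degR G)) = wR G := by
    rw [adj_swap]; rfl
  have e4 : (1 : Fin n → ℝ) ⬝ᵥ degR G = ∑ i, degR G i := one_dotProduct _
  have e5 : (1 : Fin n → ℝ) ⬝ᵥ 1 = n := by simp
  have e6 : (1 : Fin n → ℝ) ⬝ᵥ (adjR G *ᵥ z3) ≤ 2 * ((1 : Fin n → ℝ) ⬝ᵥ z3) := by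
    rw [adj_swap, one_dotProduct, Finset.mul_sum]
    exact Finset.sum_le_sum fun i _ => mul_le_mul_of_nonneg_right (hd i) (p3 i)
  simp only [dotProduct_add, dotProduct_smul, e2, e3, e4, e5, hz1', smul_eq_mul] at s0 s1 s2 s3
  generalize (1 : Fin n → ℝ) ⬝ᵥ z3 = a3 at *
  generalize (1 : Fin n → ℝ) ⬝ᵥ z2 = a2 at *
  generalize (1 : Fin n → ℝ) ⬝ᵥ z1 = a1 at *
  have : (t - 2) * a3 ≤ wR G := by linarith
  have a3e : a3 = t ^ 3 - (n * t ^ 2 + (∑ i, degR G i) * t + qR G) := by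
    have : a1 = t - n := by linarith
    subst this
    have : a2 = t * (t - n) - ∑ i, degR G i := by linarith
    subst this
    linarith
  rw [a3e] at this
  linarith

lemma degR_nat {n : ℕ} (G : SimpleGraph (Fin n)) (i) : degR G i = (G.degree i : ℝ) := by
  rw [degR_apply]
  simp only [adjR, Finset.sum_boole]
  rw [← SimpleGraph.card_neighborFinset_eq_degree]
  congr 2
  ext j
  simp

lemma tree_sum {n : ℕ} {T : SimpleGraph (Fin n)} (hT : T.IsTree) :
    ∑ i, degR T i = 2 * n - 2 := by
  simp only [degR_nat]
  have h1 := T.sum_degrees_eq_twice_card_edges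
  have h2 := hT.card_edgeFinset
  rw [Fintype.card_fin] at h2
  have h3 : ((∑ i, T.degree i : ℕ) : ℝ) = ((2 * T.edgeFinset.card : ℕ) : ℝ) := by rw [h1]
  have h4 : ((T.edgeFinset.card + 1 : ℕ) : ℝ) = n := by rw [h2]
  push_cast at h3 h4
  rw [h3]
  linarith

lemma qR_eq {n : ℕ} (G : SimpleGraph (Fin n)) : qR G = ∑ i, degR G i ^ 2 := by
  simp [qR, dotProduct, sq]

lemma wR_eq {n : ℕ} (G : SimpleGraph (Fin n)) :
    wR G = ∑ i, ∑ j, adjR G i j * (degR G i * degR G j) := by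
  simp only [wR, dotProduct, mulVec, Finset.mul_sum]
  exact Finset.sum_congr rfl fun i _ => Finset.sum_congr rfl fun j _ => by ring

lemma sum_adj_left {n : ℕ} (G : SimpleGraph (Fin n)) (f : Fin n → ℝ) :
    ∑ i, ∑ j, adjR G i j * f i = ∑ i, degR G i * f i := by
  simp only [degR_apply, Finset.sum_mul]

lemma sum_adj_right {n : ℕ} (G : SimpleGraph (Fin n)) (f : Fin n → ℝ) :
    ∑ i, ∑ j, adjR G i j * f j = ∑ i, degR G i * f i := by
  rw [Finset.sum_comm, ← sum_adj_left]
  exact Finset.sum_congr rfl fun i _ => Finset.sum_congr rfl fun j _ => by rw [adjR_symm]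

lemma tree_degree_pos {n : ℕ} {T : SimpleGraph (Fin n)} (hT : T.IsTree) (hn : 2 ≤ n) (i) :
    1 ≤ T.degree i := by
  have : Nontrivial (Fin n) := Fin.nontrivial_iff_two_le.2 hn
  exact hT.connected.preconnected.degree_pos_of_nontrivial i

lemma tree_w {n : ℕ} {T : SimpleGraph (Fin n)} (hT : T.IsTree) (hn : 2 ≤ n) :
    qR T + 4 * n - 10 ≤ wR T := by
  have hpos := tree_degree_pos hT hn
  let g : Fin n → ℝ := fun i => if T.degree i = 1 then 1 else 0
  have key : ∑ i, ∑ j, adjR T i j * ((degR T i + degR T j) - g i - g j) ≤ wR T := by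
    rw [wR_eq]
    refine Finset.sum_le_sum fun i _ => Finset.sum_le_sum fun j _ =>
      mul_le_mul_of_nonneg_left ?_ (adjR_nonneg T i j)
    simp only [degR_nat, g]
    have hi := hpos i
    have hj := hpos j
    generalize T.degree i = a at *
    generalize T.degree j = b at *
    have hi' : (1 : ℝ) ≤ a := by exact_mod_cast hi
    have hj' : (1 : ℝ) ≤ b := by exact_mod_cast hj
    split_ifs with h1 h2 h2
    · subst h1 h2; norm_num
    · subst h1; push_cast; linarith
    · subst h2; push_cast; linarith
    · have hi2 : (2 : ℝ) ≤ a := by exact_mod_cast (by omega : 2 ≤ a)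
      have hj2 : (2 : ℝ) ≤ b := by exact_mod_cast (by omega : 2 ≤ b)
      nlinarith
  have e : ∑ i, ∑ j, adjR T i j * ((degR T i + degR T j) - g i - g j)
      = 2 * qR T - 2 * ∑ i, degR T i * g i := by
    simp only [mul_sub, mul_add, Finset.sum_sub_distrib, Finset.sum_add_distrib, sum_adj_left,
      sum_adj_right, qR_eq, sq]
    ring
  have hg : ∑ i, degR T i * g i ≤ ∑ i, (degR T i ^ 2 - 5 * degR T i + 6) / 2 := by
    refine Finset.sum_le_sum fun i _ => ?_
    simp only [degR_nat, g]
    have hi := hpos i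
    generalize T.degree i = a at *
    split_ifs with h1
    · subst h1; norm_num
    · have : 2 ≤ a := by omega
      rcases this.eq_or_lt with h | h
      · subst h; norm_num
      · have : (3 : ℝ) ≤ a := by exact_mod_cast h
        nlinarith
  have e2 : ∑ i, (degR T i ^ 2 - 5 * degR T i + 6) / 2 = (qR T - 4 * n + 10) / 2 := by
    rw [← Finset.sum_div, Finset.sum_add_distrib, Finset.sum_sub_distrib, ← Finset.mul_sum,
      tree_sum hT, qR_eq]
    simp
    ring
  linarith

lemma tree_q {n : ℕ} {T : SimpleGraph (Fin n)} (hT : T.IsTree)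
    (h3 : ∃ i, 3 ≤ T.degree i) : 4 * n - 4 ≤ qR T := by
  obtain ⟨k, hk⟩ := h3
  have e2 : ∑ i, (degR T i - 1) * (degR T i - 2) = qR T - 4 * n + 6 := by
    have : ∀ i, (degR T i - 1) * (degR T i - 2) = degR T i ^ 2 - 3 * degR T i + 2 := by
      intro i; ring
    simp only [this]
    rw [Finset.sum_add_distrib, Finset.sum_sub_distrib, ← Finset.mul_sum,
      tree_sum hT, qR_eq]
    simp
    ring
  have h0 : ∀ i ∈ Finset.univ, 0 ≤ (degR T i - 1) * (degR T i - 2) := by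
    intro i _
    rw [degR_nat]
    generalize T.degree i = a
    rcases le_or_gt a 1 with h | h
    · have : (a : ℝ) ≤ 1 := by exact_mod_cast h
      nlinarith
    · have : (2 : ℝ) ≤ a := by exact_mod_cast h
      nlinarith
  have := Finset.single_le_sum h0 (Finset.mem_univ k)
  rw [e2, degR_nat] at this
  have h3 : (3 : ℝ) ≤ T.degree k := by exact_mod_cast hk
  nlinarith

lemma path_deg {n : ℕ} (hn : 2 ≤ n) (i : Fin n) : degR (pathGraph n) i =
    (if i = ⟨0, by omega⟩ then 0 else 1) + (if i = ⟨n - 1, by omega⟩ then 0 else 1) := by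
  rw [degR_apply]
  have h : ∀ j, adjR (pathGraph n) i j =
      (if (j : ℕ) + 1 = i then (1 : ℝ) else 0) + (if (i : ℕ) + 1 = j then 1 else 0) := by
    intro j
    simp only [adjR, pathGraph_adj]
    split_ifs <;> first | omega | norm_num
  simp only [h, Finset.sum_add_distrib]
  congr 1
  · split_ifs with h0
    · apply Finset.sum_eq_zero
      intro j _
      rw [if_neg]
      subst h0; simp
    · have : (i : ℕ) ≠ 0 := fun h => h0 (Fin.ext h)
      rw [Finset.sum_eq_single (⟨i - 1, by omega⟩ : Fin n)]
      · rw [if_pos]; simp only; omega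
      · intro j _ hj
        rw [if_neg]
        intro h; apply hj; ext; simp only; omega
      · simp
  · split_ifs with h0
    · apply Finset.sum_eq_zero
      intro j _
      rw [if_neg]
      subst h0; simp only; omega
    · have : (i : ℕ) ≠ n - 1 := fun h => h0 (Fin.ext h)
      rw [Finset.sum_eq_single (⟨i + 1, by omega⟩ : Fin n)]
      · rw [if_pos rfl]
      · intro j _ hj
        rw [if_neg]
        intro h; apply hj; ext; simp only; omega
      · simp

lemma path_sum {n : ℕ} (hn : 2 ≤ n) : ∑ i, degR (pathGraph n) i = 2 * n - 2 := by
  simp only [path_deg hn]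
  have h : ∀ k : Fin n, ∑ i : Fin n, (if i = k then (0 : ℝ) else 1) = n - 1 := by
    intro k
    have : ∀ i : Fin n, (if i = k then (0 : ℝ) else 1) = 1 - if i = k then 1 else 0 := by
      intro i; split_ifs <;> norm_num
    simp [this]
  rw [Finset.sum_add_distrib, h, h]
  ring

lemma path_deg_cases {n : ℕ} (hn : 2 ≤ n) (i : Fin n) :
    degR (pathGraph n) i = 1 ∨ degR (pathGraph n) i = 2 := by
  rw [path_deg hn]
  split_ifs with h1 h2
  · subst h1; simp only [Fin.mk.injEq] at h2; omega
  · norm_num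
  · norm_num
  · norm_num

lemma path_q {n : ℕ} (hn : 2 ≤ n) : qR (pathGraph n) = 4 * n - 6 := by
  rw [qR_eq]
  have : ∀ i, degR (pathGraph n) i ^ 2 = 3 * degR (pathGraph n) i - 2 := by
    intro i
    rcases path_deg_cases hn i with h | h <;> rw [h] <;> norm_num
  simp only [this]
  rw [Finset.sum_sub_distrib, ← Finset.mul_sum, path_sum hn]
  simp
  ring

lemma path_w {n : ℕ} (hn : 3 ≤ n) : wR (pathGraph n) = 8 * n - 16 := by
  have hn2 : 2 ≤ n := by omega
  have h : ∀ i j, adjR (pathGraph n) i j * (degR (pathGraph n) i * degR (pathGraph n) j) =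
      adjR (pathGraph n) i j * (2 * degR (pathGraph n) i) +
      adjR (pathGraph n) i j * (2 * degR (pathGraph n) j) - 4 * adjR (pathGraph n) i j := by
    intro i j
    by_cases ha : (pathGraph n).Adj i j
    · have : degR (pathGraph n) i = 2 ∨ degR (pathGraph n) j = 2 := by
        rw [path_deg hn2, path_deg hn2]
        simp only [Fin.ext_iff]
        rw [pathGraph_adj] at ha
        split_ifs <;> first | omega | norm_num
      rcases this with h | h <;> rw [h] <;> ring
    · simp [adjR, ha]
  rw [wR_eq]
  simp only [h, Finset.sum_sub_distrib, Finset.sum_add_distrib, sum_adj_left, sum_adj_right]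
  simp only [← Finset.mul_sum, ← degR_apply, path_sum hn2]
  have h2 : ∑ i, degR (pathGraph n) i * (2 * degR (pathGraph n) i) = 2 * qR (pathGraph n) := by
    rw [qR_eq, Finset.mul_sum]
    exact Finset.sum_congr rfl fun i _ => by ring
  rw [h2, path_q hn2]
  ring

lemma path_good {n : ℕ} (hn : 5 ≤ n) : Good (pathGraph n) := by
  intro u v h
  simp only [pathGraph_adj] at *
  by_contra hc
  push Not at hc
  have h0 := hc ⟨0, by omega⟩
  have h1 := hc ⟨1, by omega⟩
  have h2 := hc ⟨2, by omega⟩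
  have h3 := hc ⟨3, by omega⟩
  have h4 := hc ⟨4, by omega⟩
  simp only [ne_eq, Fin.ext_iff] at h0 h1 h2 h3 h4
  omega

lemma tree_good {n : ℕ} {T : SimpleGraph (Fin n)} (hT : T.IsTree)
    (hd : ∃ u v : Fin n, 3 < T.dist u v) : Good T := by
  intro u v huv
  by_contra hc
  push Not at hc
  obtain ⟨a, b, hab⟩ := hd
  have hu : ∀ w, (T.dist w u ≤ 1 ∧ T.dist w v ≤ 2) ∨ (T.dist w v ≤ 1 ∧ T.dist w u ≤ 2) := by
    have huv1 : T.dist u v = 1 := dist_eq_one_iff_adj.2 huv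
    have hvu1 : T.dist v u = 1 := dist_eq_one_iff_adj.2 huv.symm
    intro w
    have t1 := hT.connected.dist_triangle (u := w) (v := u) (w := v)
    have t2 := hT.connected.dist_triangle (u := w) (v := v) (w := u)
    by_cases h1 : w = u
    · subst h1; left; simp; omega
    by_cases h2 : w = v
    · subst h2; right; simp; omega
    by_cases h3 : T.Adj u w
    · have := dist_eq_one_iff_adj.2 h3.symm
      left; omega
    · have := dist_eq_one_iff_adj.2 (hc w h1 h2 h3).symm
      right; omega
  have t1 := hT.connected.dist_triangle (u := a) (v := u) (w := b)
  have t2 := hT.connected.dist_triangle (u := a) (v := v) (w := b)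
  rw [T.dist_comm (u := u) (v := b)] at t1
  rw [T.dist_comm (u := v) (v := b)] at t2
  have := hu a
  have := hu b
  omega

lemma tree_parent {n : ℕ} {T : SimpleGraph (Fin n)} (hT : T.IsTree) (c v : Fin n) (h : v ≠ c) :
    ∃ p, T.Adj v p ∧ T.dist c v = T.dist c p + 1 := by
  obtain ⟨w, hw⟩ := hT.connected.exists_walk_length_eq_dist v c
  cases w with
  | nil => exact absurd rfl h
  | @cons _ p _ hadj q =>
    refine ⟨p, hadj, ?_⟩
    rw [Walk.length_cons] at hw
    have h1 := dist_le q
    have h2 := hT.connected.dist_triangle (u := v) (v := p) (w := c)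
    rw [dist_eq_one_iff_adj.2 hadj] at h2
    rw [T.dist_comm (u := c), T.dist_comm (u := c)]
    omega

lemma tree_path {n : ℕ} {T : SimpleGraph (Fin n)} (hT : T.IsTree) (hn : 2 ≤ n)
    (h2 : ∀ i, T.degree i ≤ 2) : Nonempty (T ≃g pathGraph n) := by
  have : Nontrivial (Fin n) := Fin.nontrivial_iff_two_le.2 hn
  obtain ⟨u, hu⟩ := hT.exists_vert_degree_one_of_nontrivial
  have inj : ∀ k : ℕ, ∀ v v', T.dist u v = k → T.dist u v' = k → v = v' := by
    intro k
    induction k with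
    | zero =>
      intro v v' h h'
      rw [hT.connected.dist_eq_zero_iff] at h h'
      rw [← h, ← h']
    | succ k ih =>
      intro v v' h h'
      by_contra hne
      obtain ⟨p, hp, hpd⟩ := tree_parent hT u v (by rintro rfl; simp at h)
      obtain ⟨p', hp', hpd'⟩ := tree_parent hT u v' (by rintro rfl; simp at h')
      have : p' = p := ih p' p (by omega) (by omega)
      subst this
      rcases Nat.eq_zero_or_pos k with hk | hk
      · have : u = p' := hT.connected.dist_eq_zero_iff.1 (by omega)
        subst this
        have : ({v, v'} : Finset (Fin n)) ⊆ T.neighborFinset u := by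
          intro x hx
          simp only [Finset.mem_insert, Finset.mem_singleton] at hx
          rw [mem_neighborFinset]
          rcases hx with rfl | rfl
          · exact hp.symm
          · exact hp'.symm
        have := Finset.card_le_card this
        rw [Finset.card_pair hne, card_neighborFinset_eq_degree] at this
        have hu' : T.degree u = 1 := by convert hu
        omega
      · obtain ⟨r, hr, hrd⟩ := tree_parent hT u p' (by intro h; rw [h, dist_self] at hpd; omega)
        have : ({v, v', r} : Finset (Fin n)) ⊆ T.neighborFinset p' := by
          intro x hx
          simp only [Finset.mem_insert, Finset.mem_singleton] at hx
          rw [mem_neighborFinset]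
          rcases hx with rfl | rfl | rfl
          · exact hp.symm
          · exact hp'.symm
          · exact hr
        have := Finset.card_le_card this
        have hvr : v ≠ r := by rintro rfl; omega
        have hvr' : v' ≠ r := by rintro rfl; omega
        rw [Finset.card_eq_three.2 ⟨v, v', r, hne, hvr, hvr', rfl⟩,
          card_neighborFinset_eq_degree] at this
        have := h2 p'
        omega
  have lt : ∀ v, T.dist u v < n := by
    intro v
    obtain ⟨p, hp, hl⟩ := hT.connected.exists_path_of_dist u v
    have := hp.length_lt
    rw [Fintype.card_fin] at this
    omega
  let f : Fin n → Fin n := fun v => ⟨T.dist u v, lt v⟩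
  have finj : Function.Injective f := by
    intro v v' h
    simp only [f, Fin.mk.injEq] at h
    exact inj _ v v' h rfl
  have fbij : Function.Bijective f := Finite.injective_iff_bijective.1 finj
  refine ⟨⟨Equiv.ofBijective f fbij, ?_⟩⟩
  intro a b
  simp only [Equiv.ofBijective_apply, pathGraph_adj, f]
  have key : ∀ a b, T.dist u a + 1 = T.dist u b → T.Adj a b := by
    intro a b h
    obtain ⟨p, hp, hpd⟩ := tree_parent hT u b (by rintro rfl; simp at h)
    have : p = a := inj _ p a rfl (by omega)
    subst this
    exact hp.symm
  constructor
  · rintro (h | h)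
    · exact key _ _ h
    · exact (key _ _ h).symm
  · intro h
    rcases hT.dist_eq_dist_add_one_of_adj u h with h | h <;> omega

lemma good_rayleigh {n : ℕ} {G : SimpleGraph (Fin n)} (h : Good G) {l : ℝ}
    (hl : IsGreatest (spectrum ℝ (distMatrix Gᶜ)) l) (y : Fin n → ℝ) :
    (∑ j, y j) ^ 2 + y ⬝ᵥ (adjR G *ᵥ y) ≤ (l + 1) * (y ⬝ᵥ y) := by
  have := rayleigh_le (distMatrix_herm _) hl y
  rw [dist_quad h] at this
  linarith

lemma left_strict {n : ℕ} {T : SimpleGraph (Fin n)} (hn : 5 ≤ n)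
    (hT : T.IsTree) (hg : Good T) (h3 : ∃ i, 3 ≤ T.degree i) {lamP lamT : ℝ}
    (hlamP : IsGreatest (spectrum ℝ (distMatrix (pathGraph n)ᶜ)) lamP)
    (hlamT : IsGreatest (spectrum ℝ (distMatrix Tᶜ)) lamT) : lamP < lamT := by
  by_contra hlt
  push Not at hlt
  have hn2 : 2 ≤ n := by omega
  have hnR : (5 : ℝ) ≤ n := by exact_mod_cast hn
  have hPg := path_good hn
  have ht : (n : ℝ) + 1 ≤ lamP + 1 := by
    have h1 := good_rayleigh hPg hlamP 1
    have e1 : (1 : Fin n → ℝ) ⬝ᵥ (adjR (pathGraph n) *ᵥ 1) = 2 * n - 2 := by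
      rw [one_dotProduct, ← path_sum hn2]; rfl
    have e5 : (1 : Fin n → ℝ) ⬝ᵥ 1 = n := by simp
    rw [e1, e5] at h1
    simp at h1
    nlinarith
  obtain ⟨t, htdef⟩ : ∃ t, t = lamP + 1 := ⟨_, rfl⟩
  rw [← htdef] at ht
  have hlow := lower_core T t (by
    intro y
    refine (good_rayleigh hg hlamT y).trans ?_
    apply mul_le_mul_of_nonneg_right (by linarith)
    exact Finset.sum_nonneg fun i _ => mul_self_nonneg _)
  obtain ⟨x, hx0, hx⟩ := exists_eigvec hlamP.1
  have hup := upper_core (pathGraph n)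
    (fun i => by rcases path_deg_cases hn2 i with h | h <;> rw [h]; norm_num) t (by linarith)
    x hx0 (by
      intro i
      have := congrFun hx i
      rw [dist_mulVec hPg] at this
      simp only [Pi.smul_apply, smul_eq_mul] at this
      rw [htdef]
      linarith)
  rw [path_sum hn2, path_q hn2, path_w (by omega)] at hup
  rw [tree_sum hT] at hlow
  have hw := tree_w hT hn2
  have hq := tree_q hT h3
  obtain ⟨δ, hδ⟩ : ∃ δ, δ = qR T - 4 * n + 6 := ⟨_, rfl⟩
  have hδ2 : 2 ≤ δ := by linarith
  obtain ⟨X, hX⟩ : ∃ X, X = t ^ 3 - (n * t ^ 2 + (2 * n - 2) * t + (4 * n - 6)) := ⟨_, rfl⟩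
  have h1 : (t - 2) * X ≤ 8 * n - 16 := by rw [hX]; linarith
  have h2 : δ * t + (8 * n - 16 + δ) ≤ t * X := by
    rw [hX]
    have : qR T = δ + 4 * n - 6 := by linarith
    rw [this] at hlow hw
    linarith
  have h4 : (t - 2) * (δ * t + (8 * n - 16 + δ)) ≤ t * (8 * n - 16) := by
    have a1 := mul_le_mul_of_nonneg_left h2 (by linarith : 0 ≤ t - 2)
    have a2 := mul_le_mul_of_nonneg_left h1 (by linarith : 0 ≤ t)
    linarith
  have h5 : δ * ((t + 1) * (t - 2)) ≤ 16 * n - 32 := by linarith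
  have h6 : ((n : ℝ) + 2) * (n - 1) ≤ (t + 1) * (t - 2) := by nlinarith
  have h7 : 0 ≤ (t + 1) * (t - 2) := by nlinarith
  have h8 := mul_le_mul_of_nonneg_right hδ2 h7
  nlinarith [sq_nonneg ((n : ℝ) - 4)]

lemma iso_spectrum {n : ℕ} {G H : SimpleGraph (Fin n)} (hG : Good G) (hH : Good H)
    (e : G ≃g H) : spectrum ℝ (distMatrix Gᶜ) = spectrum ℝ (distMatrix Hᶜ) := by
  have : distMatrix Hᶜ = Matrix.reindexAlgEquiv ℝ ℝ e.toEquiv (distMatrix Gᶜ) := by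
    ext i j
    rw [Matrix.coe_reindexAlgEquiv, Matrix.reindex_apply, Matrix.submatrix_apply,
      distMatrix_good hG, distMatrix_good hH]
    have : G.Adj (e.toEquiv.symm i) (e.toEquiv.symm j) ↔ H.Adj i j := e.symm.map_adj_iff
    simp [adjR, this]
  rw [this, AlgEquiv.spectrum_eq]

lemma broom_adj {n : ℕ} (i j : Fin n) : (broom n).Adj i j ↔ i ≠ j ∧
    ((((i : ℕ) = 0 ∧ (j : ℕ) = 1) ∨ ((i : ℕ) = 2 ∧ (j : ℕ) ≠ 2 ∧ (j : ℕ) ≠ 0)) ∨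
    (((j : ℕ) = 0 ∧ (i : ℕ) = 1) ∨ ((j : ℕ) = 2 ∧ (i : ℕ) ≠ 2 ∧ (i : ℕ) ≠ 0))) := by
  rw [broom, SimpleGraph.fromRel_adj]

lemma broom_not_good {n : ℕ} (hn : 5 ≤ n) : ¬ Good (broom n) := by
  intro h
  obtain ⟨w, h1, h2, h3, h4⟩ := h ⟨1, by omega⟩ ⟨2, by omega⟩ (by
    rw [broom_adj]; simp)
  rw [broom_adj] at h3 h4
  simp [Fin.ext_iff] at h1 h2 h3 h4
  omega

lemma good_iso {n : ℕ} {G H : SimpleGraph (Fin n)} (hG : Good G) (e : G ≃g H) : Good H := by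
  intro u v h
  obtain ⟨w, h1, h2, h3, h4⟩ := hG (e.symm u) (e.symm v) (e.symm.map_adj_iff.2 h)
  refine ⟨e w, ?_, ?_, ?_, ?_⟩
  · rintro rfl; simp at h1
  · rintro rfl; simp at h2
  · intro h; apply h3; rw [← e.map_adj_iff]; simpa using h
  · intro h; apply h4; rw [← e.map_adj_iff]; simpa using h

lemma broom_compl_connected {n : ℕ} (hn : 5 ≤ n) (i j : Fin n) : (broom n)ᶜ.Reachable i j := by
  have h3 : ∀ i : Fin n, (broom n)ᶜ.Reachable ⟨0, by omega⟩ i := by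
    intro i
    by_cases h0 : (i : ℕ) = 0
    · have : i = ⟨0, by omega⟩ := Fin.ext h0
      rw [this]
    by_cases h1 : (i : ℕ) = 1
    · have a1 : (broom n)ᶜ.Adj ⟨0, by omega⟩ ⟨3, by omega⟩ := by
        rw [compl_adj, broom_adj]; simp
      have a2 : (broom n)ᶜ.Adj ⟨3, by omega⟩ i := by
        rw [compl_adj, broom_adj]; simp [Fin.ext_iff]; omega
      exact a1.reachable.trans a2.reachable
    · have a1 : (broom n)ᶜ.Adj ⟨0, by omega⟩ i := by
        rw [compl_adj, broom_adj]; simp [Fin.ext_iff]; omega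
      exact a1.reachable
  exact (h3 i).symm.trans (h3 j)

/-- Indicator of the ordered pair `(a, b)`. -/
noncomputable def ind {n : ℕ} (a b i j : Fin n) : ℝ := if i = a ∧ j = b then 1 else 0

lemma sum_ind {n : ℕ} (a b : Fin n) (f : Fin n → Fin n → ℝ) :
    ∑ i, ∑ j, ind a b i j * f i j = f a b := by
  simp [ind, ite_and]

lemma broom_lower {n : ℕ} (hn : 5 ≤ n) (i j : Fin n) :
    1 - (if i = j then 1 else 0) + adjR (broom n) i j
      + ind ⟨1, by omega⟩ ⟨2, by omega⟩ i j ≤ distMatrix (broom n)ᶜ i j := by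
  unfold distMatrix
  by_cases hij : i = j
  · subst hij
    simp only [ind, Fin.ext_iff, adjR]
    rw [if_neg (show ¬((i : ℕ) = 1 ∧ (i : ℕ) = 2) by omega)]
    simp
  have hr := broom_compl_connected hn i j
  have hp := hr.pos_dist_of_ne hij
  by_cases ha : (broom n).Adj i j
  · have h1 := hr.one_lt_dist_of_ne_of_not_adj hij (fun h => ((compl_adj _ _ _).1 h).2 ha)
    by_cases hs : (i : ℕ) = 1 ∧ (j : ℕ) = 2
    · have h3 : 3 ≤ (broom n)ᶜ.dist i j := by
        by_contra hlt
        have hd : (broom n)ᶜ.dist i j = 2 := by omega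
        obtain ⟨p, hp⟩ := hr.exists_walk_length_eq_dist
        rw [hd] at hp
        cases p with
        | nil => simp at hp
        | @cons _ v _ e1 q =>
          cases q with
          | nil => simp at hp
          | @cons _ v' _ e2 r =>
            cases r with
            | nil =>
              rw [compl_adj, broom_adj] at e1 e2
              simp only [ne_eq, Fin.ext_iff] at *
              omega
            | cons _ _ => simp at hp
      have h3' : (3 : ℝ) ≤ (broom n)ᶜ.dist i j := by exact_mod_cast h3
      simp only [ind, Fin.ext_iff, adjR, ha, if_true]
      split_ifs <;> linarith
    · have h3' : (2 : ℝ) ≤ (broom n)ᶜ.dist i j := by exact_mod_cast h1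
      simp only [ind, Fin.ext_iff, adjR, ha, if_true, hs, if_false]
      split_ifs <;> linarith
  · have hs : ¬ ((i : ℕ) = 1 ∧ (j : ℕ) = 2) := by
      intro hs
      apply ha
      rw [broom_adj]
      refine ⟨hij, ?_⟩
      omega
    have h3' : (1 : ℝ) ≤ (broom n)ᶜ.dist i j := by exact_mod_cast hp
    simp only [ind, Fin.ext_iff, adjR, ha, hs, if_false]
    split_ifs <;> linarith

lemma quad_eq {n : ℕ} (M : Matrix (Fin n) (Fin n) ℝ) (y : Fin n → ℝ) :
    y ⬝ᵥ (M *ᵥ y) = ∑ i, ∑ j, M i j * (y i * y j) := by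
  simp only [dotProduct, mulVec, Finset.mul_sum]
  exact Finset.sum_congr rfl fun i _ => Finset.sum_congr rfl fun j _ => by ring

/-- Lower bound for the quadratic form of the broom. -/
lemma broom_quad {n : ℕ} (hn : 5 ≤ n) (y : Fin n → ℝ) (hy : ∀ i, 0 ≤ y i) :
    (∑ j, y j) ^ 2 - y ⬝ᵥ y
      + 2 * ((∑ j, y j - y ⟨2, by omega⟩ - y ⟨0, by omega⟩) * y ⟨2, by omega⟩
        + y ⟨0, by omega⟩ * y ⟨1, by omega⟩)
      + y ⟨1, by omega⟩ * y ⟨2, by omega⟩ ≤ y ⬝ᵥ (distMatrix (broom n)ᶜ *ᵥ y) := by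
  obtain ⟨v0, e0⟩ : ∃ v : Fin n, v = ⟨0, by omega⟩ := ⟨_, rfl⟩
  obtain ⟨v1, e1⟩ : ∃ v : Fin n, v = ⟨1, by omega⟩ := ⟨_, rfl⟩
  obtain ⟨v2, e2⟩ : ∃ v : Fin n, v = ⟨2, by omega⟩ := ⟨_, rfl⟩
  rw [← e0, ← e1, ← e2, quad_eq]
  have hb : ∀ i j, 1 - (if i = j then 1 else 0)
      + ((if i = v2 then 1 else 0) - ind v2 v2 i j - ind v2 v0 i j
        + (if j = v2 then 1 else 0) - ind v2 v2 i j - ind v0 v2 i j + ind v0 v1 i j + ind v1 v0 i j)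
      + ind v1 v2 i j ≤ distMatrix (broom n)ᶜ i j := by
    intro i j
    refine le_trans (le_of_eq ?_) (broom_lower hn i j)
    rw [← e1, ← e2]
    congr 2
    simp only [adjR, broom_adj, ind, e0, e1, e2, Fin.ext_iff, ne_eq]
    by_cases i2 : (i : ℕ) = 2 <;> by_cases j2 : (j : ℕ) = 2 <;>
    by_cases i0 : (i : ℕ) = 0 <;> by_cases j0 : (j : ℕ) = 0 <;>
    by_cases i1 : (i : ℕ) = 1 <;> by_cases j1 : (j : ℕ) = 1 <;>
    first | omega | (simp [i2, j2, i0, j0, i1, j1]; done) |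
      (simp [i2, j2, i0, j0, i1, j1]; omega)
  have h2 : ∑ i, ∑ j, (1 - (if i = j then 1 else 0)
      + ((if i = v2 then 1 else 0) - ind v2 v2 i j - ind v2 v0 i j
        + (if j = v2 then 1 else 0) - ind v2 v2 i j - ind v0 v2 i j + ind v0 v1 i j + ind v1 v0 i j)
      + ind v1 v2 i j) * (y i * y j) ≤ ∑ i, ∑ j, distMatrix (broom n)ᶜ i j * (y i * y j) :=
    Finset.sum_le_sum fun i _ => Finset.sum_le_sum fun j _ =>
      mul_le_mul_of_nonneg_right (hb i j) (mul_nonneg (hy i) (hy j))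
  refine le_trans (le_of_eq ?_) h2
  simp only [add_mul, sub_mul, Finset.sum_add_distrib, Finset.sum_sub_distrib, sum_ind]
  have a1 : ∑ i, ∑ j, 1 * (y i * y j) = (∑ j, y j) ^ 2 := by
    simp only [one_mul, sq, Finset.sum_mul_sum]
  have a2 : ∑ i, ∑ j, (if i = j then 1 else 0) * (y i * y j) = y ⬝ᵥ y := by
    simp [dotProduct]
  have a3 : ∑ i, ∑ j, (if i = v2 then 1 else 0) * (y i * y j) = y v2 * ∑ j, y j := by
    simp [Finset.mul_sum]
  have a4 : ∑ i, ∑ j, (if j = v2 then 1 else 0) * (y i * y j) = y v2 * ∑ j, y j := by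
    simp [Finset.mul_sum, mul_comm]
  rw [a1, a2, a3, a4]
  ring

lemma parent_adj {n : ℕ} {T : SimpleGraph (Fin n)} (hT : T.IsTree) (c : Fin n)
    (p : Fin n → Fin n) (hp : ∀ v, v ≠ c → T.Adj v (p v) ∧ T.dist c v = T.dist c (p v) + 1)
    (i j : Fin n) (h : T.Adj i j) : (i ≠ c ∧ p i = j) ∨ (j ≠ c ∧ p j = i) := by
  have hcard : (Finset.univ.erase c).card = T.edgeFinset.card := by
    have h2 := hT.card_edgeFinset
    rw [Fintype.card_fin] at h2
    rw [Finset.card_erase_of_mem (Finset.mem_univ c), Finset.card_univ, Fintype.card_fin]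
    omega
  have hmaps : ∀ v ∈ Finset.univ.erase c, s(v, p v) ∈ T.edgeFinset := by
    intro v hv
    rw [mem_edgeFinset, mem_edgeSet]
    exact (hp v (Finset.ne_of_mem_erase hv)).1
  have hinj : Set.InjOn (fun v => s(v, p v)) (Finset.univ.erase c : Finset (Fin n)) := by
    intro a ha b hb hab
    have ha' := (hp a (Finset.ne_of_mem_erase ha)).2
    have hb' := (hp b (Finset.ne_of_mem_erase hb)).2
    simp only [Sym2.eq_iff] at hab
    rcases hab with h | ⟨h1, h2⟩
    · exact h.1
    · rw [h2] at ha'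
      rw [← h1] at hb'
      omega
  obtain ⟨v, hv, hve⟩ := Finset.surj_on_of_inj_on_of_card_le (s := Finset.univ.erase c)
    (t := T.edgeFinset)
    (fun v _ => s(v, p v)) hmaps (fun a b ha hb hab => hinj ha hb hab) hcard.ge s(i, j)
    (by rw [mem_edgeFinset, mem_edgeSet]; exact h)
  rw [Sym2.eq_iff] at hve
  have := Finset.ne_of_mem_erase hv
  rcases hve with ⟨rfl, h⟩ | ⟨h, rfl⟩
  · exact Or.inl ⟨this, h.symm⟩
  · exact Or.inr ⟨this, h.symm⟩

lemma tree_quad {n : ℕ} {T : SimpleGraph (Fin n)} (hT : T.IsTree) (c w : Fin n)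
    (p : Fin n → Fin n) (hp : ∀ v, v ≠ c → T.Adj v (p v) ∧ T.dist c v = T.dist c (p v) + 1)
    (hw : w ≠ c) (y : Fin n → ℝ) (hy : ∀ i, 0 ≤ y i) (hc : ∀ i, y i ≤ y c) :
    y ⬝ᵥ (adjR T *ᵥ y) ≤ 2 * ((∑ j, y j - y c - y w) * y c + y w * y (p w)) := by
  rw [quad_eq]
  have h1 : ∑ i, ∑ j, adjR T i j * (y i * y j) ≤
      ∑ i, ∑ j, ((if i ≠ c ∧ p i = j then 1 else 0) + (if j ≠ c ∧ p j = i then 1 else 0))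
        * (y i * y j) := by
    refine Finset.sum_le_sum fun i _ => Finset.sum_le_sum fun j _ =>
      mul_le_mul_of_nonneg_right ?_ (mul_nonneg (hy i) (hy j))
    unfold adjR
    split_ifs with h a b b a b b <;> try norm_num
    rcases parent_adj hT c p hp i j h with h | h
    · exact a h
    · exact b h
  have e1 : ∑ i, ∑ j, (if i ≠ c ∧ p i = j then 1 else 0) * (y i * y j)
      = ∑ i, if i ≠ c then y i * y (p i) else 0 := by
    refine Finset.sum_congr rfl fun i _ => ?_
    by_cases h : i = c <;> simp [h]
  have e2 : ∑ i, ∑ j, (if j ≠ c ∧ p j = i then 1 else 0) * (y i * y j)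
      = ∑ i, if i ≠ c then y i * y (p i) else 0 := by
    rw [Finset.sum_comm]
    refine Finset.sum_congr rfl fun i _ => ?_
    by_cases h : i = c <;> simp [h, mul_comm]
  simp only [add_mul, Finset.sum_add_distrib, e1, e2] at h1
  have h2 : ∑ i, (if i ≠ c then y i * y (p i) else 0) ≤
      ∑ i, (y i * y c - (if i = c then y c * y c else 0)
        + (if i = w then y w * y (p w) - y w * y c else 0)) := by
    refine Finset.sum_le_sum fun i _ => ?_
    by_cases h : i = c
    · subst h; simp [hw.symm]
    by_cases h' : i = w
    · subst h'; simp [h]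
    · simp [h, h']
      exact mul_le_mul_of_nonneg_left (hc _) (hy i)
  have e3 : ∑ i, (y i * y c - (if i = c then y c * y c else 0)
        + (if i = w then y w * y (p w) - y w * y c else 0))
      = (∑ j, y j - y c - y w) * y c + y w * y (p w) := by
    rw [Finset.sum_add_distrib, Finset.sum_sub_distrib, ← Finset.sum_mul]
    simp
    ring
  linarith

lemma perron_s9 {n : ℕ} {T : SimpleGraph (Fin n)} (hg : Good T) {l : ℝ}
    (hl : IsGreatest (spectrum ℝ (distMatrix Tᶜ)) l) :
    ∃ y : Fin n → ℝ, (∀ i, 0 < y i) ∧ distMatrix Tᶜ *ᵥ y = l • y := by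
  obtain ⟨x, hx0, hx⟩ := exists_eigvec hl.1
  let y : Fin n → ℝ := fun i => |x i|
  have hy0 : ∀ i, 0 ≤ y i := fun i => abs_nonneg _
  have hyx : y ⬝ᵥ y = x ⬝ᵥ x := by simp [dotProduct, y]
  have hq : x ⬝ᵥ (distMatrix Tᶜ *ᵥ x) ≤ y ⬝ᵥ (distMatrix Tᶜ *ᵥ y) := by
    rw [quad_eq, quad_eq]
    refine Finset.sum_le_sum fun i _ => Finset.sum_le_sum fun j _ =>
      mul_le_mul_of_nonneg_left ?_ (Nat.cast_nonneg _)
    simp only [y, ← abs_mul]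
    exact le_abs_self _
  have hye : distMatrix Tᶜ *ᵥ y = l • y := by
    apply rayleigh_eq_s9 (distMatrix_herm _) hl
    rw [hyx]
    refine le_trans (le_of_eq ?_) hq
    rw [hx, dotProduct_smul, smul_eq_mul]
  refine ⟨y, ?_, hye⟩
  have hs : 0 < ∑ j, y j := by
    obtain ⟨k, hk⟩ := Function.ne_iff.1 hx0
    have : 0 < y k := abs_pos.2 hk
    exact this.trans_le (Finset.single_le_sum (fun i _ => hy0 i) (Finset.mem_univ k))
  intro i
  have h1 := congrFun hye i
  rw [dist_mulVec hg] at h1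
  simp only [Pi.smul_apply, smul_eq_mul] at h1
  have h2 := mulVec_nonneg' T hy0 i
  rcases (hy0 i).eq_or_lt with h | h
  · rw [← h] at h1
    linarith
  · exact h

lemma exists_perm {n : ℕ} (a b c a' b' c' : Fin n) (h1 : a ≠ b) (h2 : a ≠ c) (h3 : b ≠ c)
    (h1' : a' ≠ b') (h2' : a' ≠ c') (h3' : b' ≠ c') :
    ∃ σ : Equiv.Perm (Fin n), σ a = a' ∧ σ b = b' ∧ σ c = c' := by
  have hf : Function.Injective ![a, b, c] := by
    intro i j
    fin_cases i <;> fin_cases j <;> simp [h1, h2, h3, h1.symm, h2.symm, h3.symm]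
  have hg : Function.Injective ![a', b', c'] := by
    intro i j
    fin_cases i <;> fin_cases j <;> simp [h1', h2', h3', h1'.symm, h2'.symm, h3'.symm]
  obtain ⟨σ, hσ⟩ := Equiv.Perm.exists_extending_pair _ _ hf hg
  exact ⟨σ, hσ 0, hσ 1, hσ 2⟩

lemma right_strict {n : ℕ} {T : SimpleGraph (Fin n)} (hn : 5 ≤ n)
    (hT : T.IsTree) (hd : ∃ u v : Fin n, 3 < T.dist u v) {lamT lamB : ℝ}
    (hlamT : IsGreatest (spectrum ℝ (distMatrix Tᶜ)) lamT)
    (hlamB : IsGreatest (spectrum ℝ (distMatrix (broom n)ᶜ)) lamB) : lamT < lamB := by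
  have hg := tree_good hT hd
  obtain ⟨y, hy, hye⟩ := perron_s9 hg hlamT
  have hy0 := fun i => (hy i).le
  obtain ⟨c, -, hc⟩ := Finset.exists_max_image Finset.univ y ⟨⟨0, by omega⟩, Finset.mem_univ _⟩
  have hc' := fun j => hc j (Finset.mem_univ j)
  have hex : ∀ v, ∃ p, v ≠ c → T.Adj v p ∧ T.dist c v = T.dist c p + 1 := by
    intro v
    by_cases h : v = c
    · exact ⟨v, fun h' => absurd h h'⟩
    · obtain ⟨p, hp⟩ := tree_parent hT c v h
      exact ⟨p, fun _ => hp⟩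
  choose p hp using hex
  have hw : ∃ w, w ≠ c ∧ p w ≠ c := by
    by_contra hcon
    push Not at hcon
    obtain ⟨u, v, huv⟩ := hd
    have h1 : ∀ w, T.dist c w ≤ 1 := by
      intro w
      by_cases h : w = c
      · subst h; simp
      · have := (hp w h).2
        rw [hcon w h, dist_self] at this
        omega
    have := hT.connected.dist_triangle (u := u) (v := c) (w := v)
    rw [T.dist_comm (u := u) (v := c)] at this
    have := h1 u
    have := h1 v
    omega
  obtain ⟨w, hwc, hpw⟩ := hw
  have hwp : w ≠ p w := (hp w hwc).1.ne
  obtain ⟨σ, s0, s1, s2⟩ := exists_perm (⟨0, by omega⟩ : Fin n) ⟨1, by omega⟩ ⟨2, by omega⟩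
    w (p w) c (by simp) (by simp) (by simp) hwp hwc hpw
  have hB := broom_quad hn (y ∘ σ) (fun i => hy0 _)
  simp only [Function.comp_apply, s0, s1, s2] at hB
  have es : ∑ j, y (σ j) = ∑ j, y j := Equiv.sum_comp σ y
  have eq : (y ∘ σ) ⬝ᵥ (y ∘ σ) = y ⬝ᵥ y := Equiv.sum_comp σ (fun i => y i * y i)
  rw [es, eq] at hB
  have hB2 := rayleigh_le (distMatrix_herm _) hlamB (y ∘ σ)
  rw [eq] at hB2
  have hq := tree_quad hT c w p hp hwc y hy0 hc'
  have hTe : y ⬝ᵥ (distMatrix Tᶜ *ᵥ y) = lamT * (y ⬝ᵥ y) := by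
    rw [hye, dotProduct_smul, smul_eq_mul]
  rw [dist_quad hg] at hTe
  have hpos := mul_pos (hy (p w)) (hy c)
  have hyy : 0 < y ⬝ᵥ y :=
    Finset.sum_pos (fun i _ => mul_pos (hy i) (hy i)) ⟨c, Finset.mem_univ _⟩
  have : lamT * (y ⬝ᵥ y) < lamB * (y ⬝ᵥ y) := by linarith
  exact lt_of_mul_lt_mul_right this hyy.le

/-- Among all trees `T` on `n` vertices with diameter `> 3`, the distance spectral
radius of the complement is minimized exactly by the path `P_n` and maximized
exactly by `T(n-3,1)`. -/
theorem stmt9 {n : ℕ} (T : SimpleGraph (Fin n))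
    (hT : T.IsTree) (hd : ∃ u v : Fin n, 3 < T.dist u v)
    (lamP lamT lamB : ℝ)
    (hlamP : IsGreatest (spectrum ℝ (distMatrix (pathGraph n)ᶜ)) lamP)
    (hlamT : IsGreatest (spectrum ℝ (distMatrix Tᶜ)) lamT)
    (hlamB : IsGreatest (spectrum ℝ (distMatrix (broom n)ᶜ)) lamB) :
    lamP ≤ lamT ∧ lamT ≤ lamB ∧
      (lamP = lamT ↔ Nonempty (T ≃g pathGraph n)) ∧
      (lamT = lamB ↔ Nonempty (T ≃g broom n)) := by
  have hn : 5 ≤ n := by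
    obtain ⟨u, v, h⟩ := hd
    obtain ⟨p, hp, hl⟩ := hT.connected.exists_path_of_dist u v
    have := hp.length_lt
    rw [Fintype.card_fin] at this
    omega
  have hg := tree_good hT hd
  have hR := right_strict hn hT hd hlamT hlamB
  have hiso : Nonempty (T ≃g pathGraph n) → lamP = lamT := by
    rintro ⟨e⟩
    rw [← iso_spectrum hg (path_good hn) e] at hlamP
    exact hlamP.unique hlamT
  have hL : lamP ≤ lamT ∧ (lamP = lamT → Nonempty (T ≃g pathGraph n)) := by
    by_cases h3 : ∃ i, 3 ≤ T.degree i
    · have := left_strict hn hT hg h3 hlamP hlamT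
      exact ⟨this.le, fun h => absurd h this.ne⟩
    · push Not at h3
      have := tree_path hT (by omega) (fun i => by have := h3 i; omega)
      exact ⟨(hiso this).le, fun _ => this⟩
  refine ⟨hL.1, hR.le, ⟨hL.2, hiso⟩, ⟨fun h => absurd h hR.ne, ?_⟩⟩
  rintro ⟨e⟩
  exact absurd (good_iso hg e) (broom_not_good hn)
end
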